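/- arXiv:1608.06847 — 2 statements merged into one kernel-verified Lean document; each statement's English description precedes it below -/
import Mathlib

section
/- Let (a_n)_{n≥1} be a strictly increasing sequence of positive integers such that there exist constants γ > 0 and C > 0 with a_n ≤ C·e^{γ(log n)²} for all n ≥ 1, and assume that there exist κ ∈ [2,3] and C' > 0 such that the additive energy satisfies E({a_1, …, a_N}) ≤ C'·N^κ for all N ≥ 1. Then for Lebesgue-almost all real α, for every ε > 0 there are infinitely many N with N·D_N*({a_1 α}, …, {a_N α}) ≥ N^{(3−κ)/2 − ε}. -/
open Filter MeasureTheory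

/-- Star-discrepancy of the first `N` points `x 1, ..., x N` of a sequence in `[0,1)`. -/
noncomputable def starDisc (N : ℕ) (x : ℕ → ℝ) : ℝ :=
  ⨆ β : Set.Ioc (0:ℝ) 1,
    |(((Finset.Icc 1 N).filter fun n => 0 ≤ x n ∧ x n < (β : ℝ)).card : ℝ) / N - (β : ℝ)|

/-- Additive energy of a finite set of integers. -/
def addEnergy (A : Finset ℤ) : ℕ :=
  ((A ×ˢ A ×ˢ A ×ˢ A).filter fun p => p.1 - p.2.1 = p.2.2.1 - p.2.2.2).card

/-!
Write `S` for the exponential sum over `{a 1, ..., a N}` and `μ` for its `L¹` norm. Hölder's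
inequality between the first, second and fourth moments gives `N ^ 3 ≤ E * μ ^ 2`, so small additive
energy forces `μ` to be large. Up to logarithms, a single dyadic level of `|S|` carries all of `μ`.
A trigonometric polynomial with values in `[0, 1]` that is tiny below the level stands in for the
indicator of the level set. Since an integer of subexponential size has few prime divisors, the
dilates of this polynomial by primes `p ≤ H` are nearly uncorrelated, so for most `α` one of the
points `p α` reaches the level as soon as `H` is large compared to the inverse measure of the level
set. This yields some `p` with `|S (p α)| ≥ p * N ^ (-ε) * μ`, and by Koksma's inequality
`|S (p α)|` is at most `2 π p` times `N` times the star-discrepancy.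
-/

section ExponentialSums

lemma integral_fourier (n : ℤ) :
    ∫ x : UnitAddCircle, fourier n x = if n = 0 then 1 else 0 := by
  have h := congr_fun (fourierCoeff_fourier (T := 1) n) 0
  simpa [fourierCoeff, Pi.single_apply, eq_comm, AddCircle.integral_haarAddCircle] using h

lemma fourier_nsmul (k : ℤ) (p : ℕ) (x : UnitAddCircle) :
    fourier k (p • x) = fourier (p * k) x := by
  rw [fourier_apply, fourier_apply, ← natCast_zsmul x p, smul_smul, mul_comm]

lemma fourier_mul_conj (k l : ℤ) (x : UnitAddCircle) :
    fourier k x * (starRingEnd ℂ) (fourier l x) = fourier (k - l) x := by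
  rw [← fourier_neg, ← fourier_add, sub_eq_add_neg]

lemma norm_fourier_apply (k : ℤ) (x : UnitAddCircle) : ‖fourier k x‖ = 1 := by
  rw [fourier_apply, Circle.norm_coe]

lemma integrable_unitAddCircle_of_continuous {E : Type*} [NormedAddCommGroup E]
    {f : UnitAddCircle → E} (hf : Continuous f) : Integrable f :=
  hf.integrable_of_hasCompactSupport (HasCompactSupport.of_compactSpace f)

lemma ofReal_norm_sq_sum_fourier {ι : Type*} (s : Finset ι) (c : ι → ℂ) (φ : ι → ℤ)
    (x : UnitAddCircle) :
    ((‖∑ i ∈ s, c i * fourier (φ i) x‖ ^ 2 : ℝ) : ℂ) =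
      ∑ i ∈ s, ∑ j ∈ s, c i * (starRingEnd ℂ) (c j) * fourier (φ i - φ j) x := by
  rw [← Complex.normSq_eq_norm_sq, ← Complex.mul_conj, map_sum, Finset.sum_mul_sum]
  refine Finset.sum_congr rfl fun i _ => Finset.sum_congr rfl fun j _ => ?_
  rw [← fourier_mul_conj, map_mul]
  ring

lemma integral_norm_sq_sum_fourier {ι : Type*} (s : Finset ι) (c : ι → ℂ) (φ : ι → ℤ) :
    ((∫ x : UnitAddCircle, ‖∑ i ∈ s, c i * fourier (φ i) x‖ ^ 2 : ℝ) : ℂ) =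
      ∑ i ∈ s, ∑ j ∈ s, if φ i = φ j then c i * (starRingEnd ℂ) (c j) else 0 := by
  have hint : ∀ i j, Integrable fun x : UnitAddCircle =>
      c i * (starRingEnd ℂ) (c j) * fourier (φ i - φ j) x := fun i j =>
    integrable_unitAddCircle_of_continuous (by fun_prop)
  rw [← integral_complex_ofReal]
  simp_rw [ofReal_norm_sq_sum_fourier]
  rw [integral_finsetSum _ fun i _ => integrable_finsetSum _ fun j _ => hint i j]
  refine Finset.sum_congr rfl fun i _ => ?_
  rw [integral_finsetSum _ fun j _ => hint i j]
  refine Finset.sum_congr rfl fun j _ => ?_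
  rw [integral_const_mul, integral_fourier, mul_ite, mul_one, mul_zero]
  simp only [sub_eq_zero]

lemma integral_norm_sq_sum_fourier_of_injOn {ι : Type*} {s : Finset ι} (c : ι → ℂ) {φ : ι → ℤ}
    (hφ : Set.InjOn φ s) :
    ∫ x : UnitAddCircle, ‖∑ i ∈ s, c i * fourier (φ i) x‖ ^ 2 = ∑ i ∈ s, ‖c i‖ ^ 2 := by
  classical
  rw [← Complex.ofReal_inj, integral_norm_sq_sum_fourier, Complex.ofReal_sum]
  refine Finset.sum_congr rfl fun i hi => ?_
  have hij : ∀ j ∈ s, (φ i = φ j ↔ i = j) := fun j hj => hφ.eq_iff hi hj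
  rw [Finset.sum_congr rfl fun j hj => if_congr (hij j hj) rfl rfl, Finset.sum_ite_eq, if_pos hi,
    Complex.mul_conj, Complex.normSq_eq_norm_sq]

lemma integral_norm_sq_sum_fourier_le {ι : Type*} {s : Finset ι} (c : ι → ℂ) {φ : ι → ℤ} {L : ℕ}
    (hL : ∀ i ∈ s, (s.filter fun j => φ i = φ j).card ≤ L) :
    ∫ x : UnitAddCircle, ‖∑ i ∈ s, c i * fourier (φ i) x‖ ^ 2 ≤ L * ∑ i ∈ s, ‖c i‖ ^ 2 := by
  have hexpand : ∫ x : UnitAddCircle, ‖∑ i ∈ s, c i * fourier (φ i) x‖ ^ 2 =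
      ∑ i ∈ s, ∑ j ∈ s, if φ i = φ j then (c i * (starRingEnd ℂ) (c j)).re else 0 := by
    rw [← Complex.ofReal_re (∫ _, _), integral_norm_sq_sum_fourier, Complex.re_sum]
    simp_rw [Complex.re_sum, apply_ite Complex.re, Complex.zero_re]
  have hamgm : ∀ z w : ℂ, (z * (starRingEnd ℂ) w).re ≤ ‖z‖ ^ 2 / 2 + ‖w‖ ^ 2 / 2 := fun z w => by
    have hre : (z * (starRingEnd ℂ) w).re ≤ ‖z‖ * ‖w‖ :=
      (Complex.re_le_norm _).trans_eq (by rw [norm_mul, RCLike.norm_conj])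
    linarith [two_mul_le_add_sq ‖z‖ ‖w‖]
  have hsymm : ∑ i ∈ s, ∑ j ∈ s, (if φ i = φ j then ‖c j‖ ^ 2 / 2 else 0) =
      ∑ i ∈ s, ∑ j ∈ s, (if φ i = φ j then ‖c i‖ ^ 2 / 2 else 0) := by
    rw [Finset.sum_comm]
    simp only [eq_comm]
  rw [hexpand]
  calc ∑ i ∈ s, ∑ j ∈ s, (if φ i = φ j then (c i * (starRingEnd ℂ) (c j)).re else 0)
      ≤ ∑ i ∈ s, ∑ j ∈ s, ((if φ i = φ j then ‖c i‖ ^ 2 / 2 else 0) +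
          (if φ i = φ j then ‖c j‖ ^ 2 / 2 else 0)) := by
        gcongr with i _ j _
        split_ifs
        · exact hamgm _ _
        · simp
    _ = ∑ i ∈ s, (s.filter fun j => φ i = φ j).card * ‖c i‖ ^ 2 := by
        simp only [Finset.sum_add_distrib, hsymm]
        simp only [← Finset.sum_add_distrib, ← Finset.sum_filter, Finset.sum_const, nsmul_eq_mul]
        exact Finset.sum_congr rfl fun _ _ => by ring
    _ ≤ L * ∑ i ∈ s, ‖c i‖ ^ 2 := by
        rw [Finset.mul_sum]
        gcongr with i hi
        exact hL i hi

/-- The exponential sum `∑ k ∈ A, e (k x)` with frequencies in `A`. -/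
noncomputable def expSum (A : Finset ℤ) (x : UnitAddCircle) : ℂ := ∑ k ∈ A, fourier k x

@[fun_prop]
lemma continuous_expSum (A : Finset ℤ) : Continuous (expSum A) := by
  unfold expSum
  fun_prop

lemma norm_expSum_le (A : Finset ℤ) (x : UnitAddCircle) : ‖expSum A x‖ ≤ A.card := by
  refine (norm_sum_le _ _).trans_eq ?_
  simp only [norm_fourier_apply, Finset.sum_const, nsmul_eq_mul, mul_one]

lemma ofReal_norm_expSum_sq (A : Finset ℤ) (x : UnitAddCircle) :
    ((‖expSum A x‖ ^ 2 : ℝ) : ℂ) = ∑ q ∈ A ×ˢ A, fourier (q.1 - q.2) x := by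
  simpa [expSum, Finset.sum_product] using ofReal_norm_sq_sum_fourier A 1 id x

lemma integral_norm_expSum_sq (A : Finset ℤ) :
    ∫ x, ‖expSum A x‖ ^ 2 = A.card := by
  simpa [expSum] using
    integral_norm_sq_sum_fourier_of_injOn (s := A) 1 (Function.injective_id.injOn)

lemma integral_norm_expSum_pow_four (A : Finset ℤ) :
    ∫ x, ‖expSum A x‖ ^ 4 = addEnergy A := by
  have hsq : ∀ x, ‖∑ q ∈ A ×ˢ A, (1 : ℂ) * fourier (q.1 - q.2) x‖ ^ 2 = ‖expSum A x‖ ^ 4 := by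
    intro x
    simp_rw [one_mul]
    rw [← ofReal_norm_expSum_sq, Complex.norm_real, Real.norm_eq_abs, sq_abs, ← pow_mul]
  have h := integral_norm_sq_sum_fourier (A ×ˢ A) (fun _ => 1) fun q => q.1 - q.2
  simp_rw [hsq] at h
  rw [← Complex.ofReal_inj, h, addEnergy, Finset.card_filter]
  push_cast
  simp only [Finset.sum_product, map_one, mul_one, apply_ite Complex.ofReal, Complex.ofReal_one,
    Complex.ofReal_zero]

lemma one_le_integral_norm_expSum {A : Finset ℤ} (hA : A.Nonempty) :
    1 ≤ ∫ x, ‖expSum A x‖ := by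
  have hcard : (0 : ℝ) < A.card := by exact_mod_cast hA.card_pos
  refine le_of_mul_le_mul_left ?_ hcard
  calc (A.card : ℝ) * 1 = ∫ x, ‖expSum A x‖ ^ 2 := by rw [mul_one, integral_norm_expSum_sq]
    _ ≤ ∫ x, A.card * ‖expSum A x‖ := by
        refine integral_mono (integrable_unitAddCircle_of_continuous (by fun_prop))
          (integrable_unitAddCircle_of_continuous (by fun_prop)) fun x => ?_
        simp only [sq]
        gcongr
        exact norm_expSum_le A x
    _ = A.card * ∫ x, ‖expSum A x‖ := integral_const_mul _ _

lemma card_pow_three_le_addEnergy_mul_sq_integral_norm_expSum (A : Finset ℤ) :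
    (A.card : ℝ) ^ 3 ≤ addEnergy A * (∫ x, ‖expSum A x‖) ^ 2 := by
  rcases A.eq_empty_or_nonempty with rfl | hA
  · rw [Finset.card_empty, Nat.cast_zero, zero_pow three_ne_zero]
    positivity
  -- Hölder's inequality `‖S‖₂⁶ ≤ ‖S‖₁² ‖S‖₄⁴`: integrate `3 T² z² ≤ z⁴ + 2 T³ z` with the optimal
  -- `T = ‖S‖₂² / ‖S‖₁`.
  set I := ∫ x, ‖expSum A x‖
  have hI : 0 < I := one_pos.trans_le (one_le_integral_norm_expSum hA)
  set T := A.card / I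
  have : 0 ≤ T := by positivity
  have hpoint : ∀ x, 3 * T ^ 2 * ‖expSum A x‖ ^ 2 ≤
      ‖expSum A x‖ ^ 4 + 2 * T ^ 3 * ‖expSum A x‖ := fun x => by
    have hfactor : 0 ≤ ‖expSum A x‖ * (‖expSum A x‖ - T) ^ 2 * (‖expSum A x‖ + 2 * T) := by
      positivity
    linarith
  have hint := integral_mono (integrable_unitAddCircle_of_continuous (by fun_prop))
    (integrable_unitAddCircle_of_continuous (by fun_prop)) hpoint
  rw [integral_const_mul, integral_norm_expSum_sq,
    integral_add (integrable_unitAddCircle_of_continuous (by fun_prop))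
      (integrable_unitAddCircle_of_continuous (by fun_prop)),
    integral_const_mul, integral_norm_expSum_pow_four] at hint
  have hTI : T * I = A.card := div_mul_cancel₀ _ hI.ne'
  have hdiff : (A.card : ℝ) * T ^ 2 ≤ addEnergy A := by
    change _ ≤ _ + 2 * T ^ 3 * I at hint
    nlinarith
  calc (A.card : ℝ) ^ 3 = A.card * T ^ 2 * I ^ 2 := by rw [← hTI]; ring
    _ ≤ addEnergy A * I ^ 2 := by gcongr

end ExponentialSums

section TrigonometricPolynomials

/-- The space of trigonometric polynomials of degree at most `J`, as functions on the circle. -/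
noncomputable def trigPoly (J : ℕ) : Submodule ℂ (UnitAddCircle → ℂ) :=
  Submodule.span ℂ ((fun k : ℤ => ⇑(fourier k)) '' (Finset.Icc (-(J : ℤ)) J : Finset ℤ))

lemma fourier_mem_trigPoly {J : ℕ} {k : ℤ} (hk : |k| ≤ J) : ⇑(fourier k) ∈ trigPoly J := by
  refine Submodule.subset_span ⟨k, ?_, rfl⟩
  simpa [abs_le] using hk

lemma one_mem_trigPoly (J : ℕ) : 1 ∈ trigPoly J := by
  have h : ⇑(fourier 0 : C(UnitAddCircle, ℂ)) = 1 := funext fun x => fourier_zero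
  exact h ▸ fourier_mem_trigPoly (by simp)

lemma mul_mem_trigPoly {J K : ℕ} {f g : UnitAddCircle → ℂ} (hf : f ∈ trigPoly J)
    (hg : g ∈ trigPoly K) : f * g ∈ trigPoly (J + K) := by
  have h := Submodule.mul_mem_mul hf hg
  rw [trigPoly, trigPoly, Submodule.span_mul_span] at h
  refine Submodule.span_le.mpr ?_ h
  rintro _ ⟨_, ⟨k, hk, rfl⟩, _, ⟨l, hl, rfl⟩, rfl⟩
  have hkl : ⇑(fourier k) * ⇑(fourier l) = ⇑(fourier (k + l) : C(UnitAddCircle, ℂ)) :=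
    funext fun x => fourier_add.symm
  simp only [hkl]
  refine fourier_mem_trigPoly ?_
  simp only [Finset.coe_Icc, Set.mem_Icc] at hk hl
  rw [abs_le]
  push_cast
  omega

lemma pow_mem_trigPoly {J : ℕ} {f : UnitAddCircle → ℂ} (hf : f ∈ trigPoly J) (d : ℕ) :
    f ^ d ∈ trigPoly (d * J) := by
  induction d with
  | zero => simpa using one_mem_trigPoly 0
  | succ d ih =>
    rw [pow_succ, Nat.succ_mul]
    exact mul_mem_trigPoly ih hf

lemma exists_eq_sum_of_mem_trigPoly {J : ℕ} {f : UnitAddCircle → ℂ} (hf : f ∈ trigPoly J) :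
    ∃ c : ℤ → ℂ, ∀ x, f x = ∑ j ∈ Finset.Icc (-(J : ℤ)) J, c j * fourier j x := by
  rw [trigPoly, Submodule.mem_span_image_finset_iff_exists_fun'] at hf
  obtain ⟨c, rfl⟩ := hf
  exact ⟨c, fun x => by simp⟩

lemma continuous_of_mem_trigPoly {J : ℕ} {f : UnitAddCircle → ℂ} (hf : f ∈ trigPoly J) :
    Continuous f := by
  obtain ⟨c, hc⟩ := exists_eq_sum_of_mem_trigPoly hf
  rw [funext hc]
  fun_prop

end TrigonometricPolynomials

section PrimeDilates

lemma card_filter_prime_dvd_le {P : Finset ℕ} (hP : ∀ p ∈ P, p.Prime) {n : ℕ} (hn : n ≠ 0) :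
    (P.filter fun p => p ∣ n).card ≤ Nat.log 2 n := by
  refine Nat.le_log_of_pow_le one_lt_two ?_
  have hsub : (P.filter fun p => p ∣ n) ⊆ n.primeFactors := by
    intro p hp
    rw [Finset.mem_filter] at hp
    exact Nat.mem_primeFactors.mpr ⟨hP p hp.1, hp.2, hn⟩
  calc 2 ^ (P.filter fun p => p ∣ n).card
      ≤ ∏ p ∈ P.filter fun p => p ∣ n, p :=
        Finset.pow_card_le_prod _ _ _ fun p hp => (hP p (Finset.mem_filter.mp hp).1).two_le
    _ ≤ ∏ p ∈ n.primeFactors, p :=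
        Finset.prod_le_prod_of_subset_of_one_le' hsub
          fun p hp _ => (Nat.prime_of_mem_primeFactors hp).one_le
    _ ≤ n := Nat.le_of_dvd (Nat.pos_of_ne_zero hn) (Nat.prod_primeFactors_dvd n)

lemma card_filter_prime_mul_eq_le {P : Finset ℕ} (hP : ∀ p ∈ P, p.Prime) (s : Finset ℤ) {n : ℤ}
    (hn : n ≠ 0) :
    ((P ×ˢ s).filter fun q => n = q.1 * q.2).card ≤ Nat.log 2 n.natAbs := by
  refine le_trans ?_ (card_filter_prime_dvd_le hP (Int.natAbs_ne_zero.mpr hn))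
  refine Finset.card_le_card_of_injOn Prod.fst ?_ ?_
  · rintro ⟨q, l⟩ hq
    simp only [Finset.coe_filter, Finset.mem_product, Set.mem_ofPred_eq] at hq ⊢
    refine ⟨hq.1.1, ?_⟩
    rw [hq.2, Int.natAbs_mul, Int.natAbs_natCast]
    exact dvd_mul_right _ _
  · rintro ⟨q, l⟩ hq ⟨q', l'⟩ hq' (rfl : q = q')
    simp only [Finset.coe_filter, Finset.mem_product, Set.mem_ofPred_eq] at hq hq'
    have hq0 : (q : ℤ) ≠ 0 := by exact_mod_cast (hP q hq.1.1).ne_zero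
    rw [mul_left_cancel₀ hq0 (hq.2.symm.trans hq'.2)]

variable {J : ℕ} {c : ℤ → ℂ} {g : UnitAddCircle → ℂ}

lemma integral_eq_coeff_zero (hc : ∀ x, g x = ∑ j ∈ Finset.Icc (-(J : ℤ)) J, c j * fourier j x) :
    ∫ x, g x = c 0 := by
  simp_rw [hc]
  rw [integral_finsetSum _ fun j _ => integrable_unitAddCircle_of_continuous (by fun_prop)]
  simp [integral_const_mul, integral_fourier, -fourier_apply]

lemma sum_dilates_sub_eq_sum_fourier
    (hc : ∀ x, g x = ∑ j ∈ Finset.Icc (-(J : ℤ)) J, c j * fourier j x) (P : Finset ℕ)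
    (x : UnitAddCircle) :
    ∑ p ∈ P, g (p • x) - P.card * ∫ y, g y =
      ∑ q ∈ P ×ˢ (Finset.Icc (-(J : ℤ)) J).erase 0, c q.2 * fourier (q.1 * q.2) x := by
  have h0 : (0 : ℤ) ∈ Finset.Icc (-(J : ℤ)) J := by simp
  have hdilate : ∀ p : ℕ, g (p • x) =
      c 0 + ∑ j ∈ (Finset.Icc (-(J : ℤ)) J).erase 0, c j * fourier (p * j) x := fun p => by
    rw [hc, ← Finset.add_sum_erase _ _ h0, fourier_zero, mul_one]
    simp_rw [fourier_nsmul]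
  rw [integral_eq_coeff_zero hc, Finset.sum_product]
  simp_rw [hdilate]
  rw [Finset.sum_add_distrib, Finset.sum_const, nsmul_eq_mul, add_sub_cancel_left]

-- The frequency `p * j` is hit by at most `log₂ (H * J)` pairs of a prime and a frequency, so the
-- dilates are almost orthogonal.
lemma integral_norm_sq_sum_prime_dilates_sub_le (hg : g ∈ trigPoly J) {P : Finset ℕ} {H : ℕ}
    (hP : ∀ p ∈ P, p.Prime) (hPH : ∀ p ∈ P, p ≤ H) :
    ∫ x, ‖∑ p ∈ P, g (p • x) - P.card * ∫ y, g y‖ ^ 2 ≤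
      Nat.log 2 (H * J) * (P.card * ∫ y, ‖g y‖ ^ 2) := by
  obtain ⟨c, hc⟩ := exists_eq_sum_of_mem_trigPoly hg
  have hparseval : ∫ y, ‖g y‖ ^ 2 = ∑ j ∈ Finset.Icc (-(J : ℤ)) J, ‖c j‖ ^ 2 := by
    simp_rw [hc]
    exact integral_norm_sq_sum_fourier_of_injOn c (φ := id) Function.injective_id.injOn
  simp_rw [sum_dilates_sub_eq_sum_fourier hc]
  refine (integral_norm_sq_sum_fourier_le (L := Nat.log 2 (H * J)) _ ?_).trans ?_
  · rintro ⟨p, j⟩ hpj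
    simp only [Finset.mem_product, Finset.mem_erase, Finset.mem_Icc] at hpj
    obtain ⟨hp, hj0, hj⟩ := hpj
    refine (card_filter_prime_mul_eq_le hP _ ?_).trans (Nat.log_mono_right ?_)
    · exact mul_ne_zero (Nat.cast_ne_zero.mpr (hP p hp).ne_zero) hj0
    · rw [Int.natAbs_mul, Int.natAbs_natCast]
      exact Nat.mul_le_mul (hPH p hp) (by omega)
  · simp only [Finset.sum_product, Finset.sum_const, nsmul_eq_mul, hparseval]
    gcongr
    exact Finset.erase_subset _ _

lemma natLog_two_le_two_mul_log (n : ℕ) : (Nat.log 2 n : ℝ) ≤ 2 * Real.log n := by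
  have h : (Nat.log 2 n : ℝ) * Real.log 2 ≤ Real.log n := by
    rw [← le_div_iff₀ (Real.log_pos one_lt_two)]
    exact_mod_cast Real.natLog_le_logb n 2
  nlinarith [Real.log_two_gt_d9, (Nat.cast_nonneg _ : (0 : ℝ) ≤ Nat.log 2 n)]

lemma le_four_mul_log_mul_primeCounting {n : ℕ} (hn : 5 ≤ n) :
    (n : ℝ) ≤ 4 * Real.log n * n.primeCounting := by
  have hnR : (5 : ℝ) ≤ n := by exact_mod_cast hn
  have hlog : 0 < Real.log n := Real.log_pos (by linarith)
  have hpi := Chebyshev.pi_ge n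
  rw [div_le_iff₀ hlog] at hpi
  have hlog_succ : Real.log ((n : ℝ) + 1) ≤ (n + 1) / 8 - 1 + 3 * Real.log 2 := by
    have hlog8 : Real.log 8 = 3 * Real.log 2 := by
      rw [show (8 : ℝ) = 2 ^ 3 by norm_num, Real.log_pow]
      norm_num
    have := Real.log_le_sub_one_of_pos (x := ((n : ℝ) + 1) / 8) (by positivity)
    rw [Real.log_div (by positivity) (by norm_num), hlog8] at this
    linarith
  nlinarith [Real.log_two_gt_d9, Real.log_two_lt_d9]

variable {f : UnitAddCircle → ℝ}

lemma integral_sq_sum_prime_dilates_sub_le_of_mem_Icc (hf : (fun x => (f x : ℂ)) ∈ trigPoly J)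
    (hf01 : ∀ x, f x ∈ Set.Icc 0 1) {P : Finset ℕ} {H : ℕ} (hP : ∀ p ∈ P, p.Prime)
    (hPH : ∀ p ∈ P, p ≤ H) :
    ∫ x, (∑ p ∈ P, f (p • x) - P.card * ∫ y, f y) ^ 2 ≤
      Nat.log 2 (H * J) * (P.card * ∫ y, f y) := by
  have hfc : Continuous f := Complex.continuous_re.comp (continuous_of_mem_trigPoly hf)
  have hsq : ∫ x, f x ^ 2 ≤ ∫ x, f x :=
    integral_mono (integrable_unitAddCircle_of_continuous (by fun_prop))
      (integrable_unitAddCircle_of_continuous hfc) fun x =>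
        pow_le_of_le_one (hf01 x).1 (hf01 x).2 two_ne_zero
  have h := integral_norm_sq_sum_prime_dilates_sub_le hf hP hPH
  simp only [integral_complex_ofReal, ← Complex.ofReal_sum, ← Complex.ofReal_natCast P.card,
    ← Complex.ofReal_mul, ← Complex.ofReal_sub, Complex.norm_real, Real.norm_eq_abs, sq_abs] at h
  exact h.trans (by gcongr)

lemma volume_forall_dilate_le (hf : (fun x => (f x : ℂ)) ∈ trigPoly J)
    (hf01 : ∀ x, f x ∈ Set.Icc 0 1) (hm : 0 < ∫ x, f x) {P : Finset ℕ} {H : ℕ}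
    (hP : ∀ p ∈ P, p.Prime) (hPH : ∀ p ∈ P, p ≤ H) (hPne : P.Nonempty) :
    volume {x | ∀ p ∈ P, f (p • x) ≤ (∫ y, f y) / 2} ≤
      ENNReal.ofReal (4 * Nat.log 2 (H * J) / (P.card * ∫ x, f x)) := by
  set m := ∫ x, f x
  have hfc : Continuous f := Complex.continuous_re.comp (continuous_of_mem_trigPoly hf)
  have hpos : 0 < P.card * m := by
    have : (0 : ℝ) < P.card := by exact_mod_cast hPne.card_pos
    positivity
  set F : UnitAddCircle → ℝ := fun x => (∑ p ∈ P, f (p • x) - P.card * m) ^ 2 with hF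
  set s := {x | (P.card * m / 2) ^ 2 ≤ F x}
  have hsub : {x | ∀ p ∈ P, f (p • x) ≤ m / 2} ⊆ s := by
    intro x hx
    have hsum : ∑ p ∈ P, f (p • x) ≤ P.card * (m / 2) := by
      rw [← nsmul_eq_mul]
      exact Finset.sum_le_card_nsmul _ _ _ hx
    rw [Set.mem_ofPred_eq, hF]
    nlinarith
  have hcheb : (P.card * m / 2) ^ 2 * volume.real s ≤ Nat.log 2 (H * J) * (P.card * m) :=
    (mul_meas_ge_le_integral_of_nonneg (Eventually.of_forall fun x => sq_nonneg _)
      (integrable_unitAddCircle_of_continuous (by fun_prop : Continuous F)) _).trans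
      (integral_sq_sum_prime_dilates_sub_le_of_mem_Icc hf hf01 hP hPH)
  refine (measure_mono hsub).trans ?_
  refine (ENNReal.le_ofReal_iff_toReal_le (measure_ne_top _ _) (by positivity)).mpr ?_
  rw [le_div_iff₀ hpos]
  refine le_of_mul_le_mul_right ?_ hpos
  calc volume.real s * (P.card * m) * (P.card * m)
      = 4 * ((P.card * m / 2) ^ 2 * volume.real s) := by ring
    _ ≤ 4 * (Nat.log 2 (H * J) * (P.card * m)) := by gcongr
    _ = 4 * Nat.log 2 (H * J) * (P.card * m) := by ring

lemma volume_forall_prime_dilate_le (hf : (fun x => (f x : ℂ)) ∈ trigPoly J)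
    (hf01 : ∀ x, f x ∈ Set.Icc 0 1) (hm : 0 < ∫ x, f x) {H : ℕ} (hH : 5 ≤ H) :
    volume {x | ∀ p : ℕ, p.Prime → p ≤ H → f (p • x) ≤ (∫ y, f y) / 2} ≤
      ENNReal.ofReal (16 * Nat.log 2 (H * J) * Real.log H / (H * ∫ x, f x)) := by
  set m := ∫ x, f x
  have hpi := le_four_mul_log_mul_primeCounting hH
  have hHpos : (0 : ℝ) < H := by positivity
  have hpi_pos : (0 : ℝ) < H.primeCounting := by
    refine pos_of_mul_pos_right (hHpos.trans_le hpi) ?_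
    have := Real.log_natCast_nonneg H
    positivity
  have hcard : (H.primesLE.card : ℝ) = H.primeCounting := by
    rw [Nat.primesLE_card_eq_primeCounting]
  have hvol := volume_forall_dilate_le hf hf01 hm (P := H.primesLE) (H := H)
    (fun p hp => (Nat.mem_primesLE.mp hp).2) (fun p hp => (Nat.mem_primesLE.mp hp).1)
    ⟨2, Nat.mem_primesLE.mpr ⟨by omega, Nat.prime_two⟩⟩
  refine (measure_mono ?_).trans (hvol.trans (ENNReal.ofReal_le_ofReal ?_))
  · exact fun x hx p hp => hx p (Nat.mem_primesLE.mp hp).2 (Nat.mem_primesLE.mp hp).1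
  rw [hcard, div_le_div_iff₀ (by positivity) (by positivity)]
  calc 4 * Nat.log 2 (H * J) * (H * m)
      ≤ 4 * Nat.log 2 (H * J) * (4 * Real.log H * H.primeCounting * m) := by gcongr
    _ = 16 * Nat.log 2 (H * J) * Real.log H * (H.primeCounting * m) := by ring

end PrimeDilates

section LevelFunctions

lemma one_sub_one_sub_pow_mem_Icc {y : ℝ} (hy : y ∈ Set.Icc 0 1) (d : ℕ) :
    1 - (1 - y) ^ d ∈ Set.Icc 0 1 := by
  have h0 : 0 ≤ (1 - y) ^ d := pow_nonneg (by linarith [hy.2]) d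
  have h1 : (1 - y) ^ d ≤ 1 := pow_le_one₀ (by linarith [hy.2]) (by linarith [hy.1])
  exact ⟨by linarith, by linarith⟩

lemma one_sub_one_sub_pow_le {y : ℝ} (hy : y ≤ 1) (d : ℕ) : 1 - (1 - y) ^ d ≤ d * y := by
  have h := one_add_mul_le_pow (a := -y) (by linarith) d
  rw [← sub_eq_add_neg] at h
  linarith

lemma half_le_one_sub_one_sub_pow {y : ℝ} (hy : y ≤ 1) {d : ℕ} (hdy : 1 ≤ d * y) :
    1 / 2 ≤ 1 - (1 - y) ^ d := by
  have hexp : Real.exp (-1) ≤ 1 / 2 := by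
    rw [Real.exp_neg, ← one_div]
    exact one_div_le_one_div_of_le two_pos (by linarith [Real.add_one_le_exp 1])
  have hpow : (1 - y) ^ d ≤ Real.exp (-1) := by
    calc (1 - y) ^ d ≤ Real.exp (-y) ^ d := by
          exact pow_le_pow_left₀ (by linarith) (Real.one_sub_le_exp_neg y) d
      _ = Real.exp (-(d * y)) := by rw [← Real.exp_nat_mul, mul_neg]
      _ ≤ Real.exp (-1) := by gcongr
  linarith

/-- A trigonometric polynomial that approximates the indicator function of the level set
`{x | A.card / 2 ^ k ≤ ‖expSum A x‖}`. Raising to the power `r` makes it small below that level. -/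
noncomputable def levelFun (A : Finset ℤ) (k r : ℕ) (x : UnitAddCircle) : ℝ :=
  (1 - (1 - (‖expSum A x‖ / A.card) ^ 2) ^ 4 ^ k) ^ r

variable (A : Finset ℤ) (k r : ℕ) (x : UnitAddCircle)

@[fun_prop]
lemma continuous_levelFun : Continuous (levelFun A k r) := by
  unfold levelFun
  fun_prop

lemma sq_norm_expSum_div_card_mem_Icc : (‖expSum A x‖ / A.card) ^ 2 ∈ Set.Icc 0 1 :=
  ⟨by positivity, pow_le_one₀ (by positivity)
    (div_le_one_of_le₀ (norm_expSum_le A x) (by positivity))⟩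

lemma sq_norm_expSum_div_level :
    (‖expSum A x‖ / (A.card / 2 ^ k)) ^ 2 = (4 ^ k : ℕ) * (‖expSum A x‖ / A.card) ^ 2 := by
  rw [Nat.cast_pow, Nat.cast_ofNat, show (4 : ℝ) = 2 ^ 2 by norm_num, ← pow_mul, mul_comm 2 k,
    pow_mul, div_div_eq_mul_div]
  ring

lemma levelFun_mem_Icc : levelFun A k r x ∈ Set.Icc 0 1 := by
  have h := one_sub_one_sub_pow_mem_Icc (sq_norm_expSum_div_card_mem_Icc A x) (4 ^ k)
  exact ⟨pow_nonneg h.1 r, pow_le_one₀ h.1 h.2⟩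

lemma levelFun_le : levelFun A k r x ≤ (‖expSum A x‖ / (A.card / 2 ^ k)) ^ (2 * r) := by
  have hmem := sq_norm_expSum_div_card_mem_Icc A x
  rw [pow_mul, sq_norm_expSum_div_level]
  exact pow_le_pow_left₀ (one_sub_one_sub_pow_mem_Icc hmem _).1
    (one_sub_one_sub_pow_le hmem.2 _) r

variable {A k r x}

lemma half_pow_le_levelFun (hA : A.Nonempty) (hx : A.card / 2 ^ k ≤ ‖expSum A x‖) :
    (1 / 2) ^ r ≤ levelFun A k r x := by
  have : (0 : ℝ) < A.card := by exact_mod_cast hA.card_pos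
  have hlevel : 1 ≤ (4 ^ k : ℕ) * (‖expSum A x‖ / A.card) ^ 2 := by
    rw [← sq_norm_expSum_div_level]
    exact one_le_pow₀ ((one_le_div (by positivity)).mpr hx)
  exact pow_le_pow_left₀ (by norm_num)
    (half_le_one_sub_one_sub_pow (sq_norm_expSum_div_card_mem_Icc A x).2 hlevel) r

lemma ofReal_levelFun_mem_trigPoly {B : ℕ} (hA : ∀ n ∈ A, |n| ≤ B) :
    (fun x => (levelFun A k r x : ℂ)) ∈ trigPoly (r * (4 ^ k * (2 * B))) := by
  have hsq : (fun x => ((‖expSum A x‖ ^ 2 : ℝ) : ℂ)) ∈ trigPoly (2 * B) := by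
    have hsum : (fun x => ((‖expSum A x‖ ^ 2 : ℝ) : ℂ)) =
        ∑ q ∈ A ×ˢ A, ⇑(fourier (q.1 - q.2) : C(UnitAddCircle, ℂ)) := by
      funext x
      rw [ofReal_norm_expSum_sq, Finset.sum_apply]
    rw [hsum]
    refine Submodule.sum_mem _ fun q hq => fourier_mem_trigPoly ?_
    rw [Finset.mem_product] at hq
    have h1 := hA _ hq.1
    have h2 := hA _ hq.2
    push_cast
    linarith [abs_sub q.1 q.2]
  have hbase := Submodule.sub_mem _ (one_mem_trigPoly (2 * B))
    (Submodule.smul_mem _ ((A.card : ℂ) ^ 2)⁻¹ hsq)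
  have h := pow_mem_trigPoly (Submodule.sub_mem _ (one_mem_trigPoly _)
    (pow_mem_trigPoly hbase (4 ^ k))) r
  convert h using 1
  funext x
  simp [levelFun, div_eq_inv_mul, mul_pow]

-- If `N / 2 ^ k < z ≤ 2 * (N / 2 ^ k)` then the `k`-th summand alone dominates `z = ‖expSum A x‖`.
lemma norm_expSum_le_sum_levelFun (hA : A.Nonempty) (r : ℕ) (x : UnitAddCircle) :
    ‖expSum A x‖ ≤ 1 / 2 + ∑ k ∈ Finset.range (Nat.log 2 A.card + 3),
      2 ^ (r + 1) * (A.card / 2 ^ k * levelFun A k r x) := by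
  have hcard : (0 : ℝ) < A.card := by exact_mod_cast hA.card_pos
  have hnonneg : ∀ k, 0 ≤ 2 ^ (r + 1) * (A.card / 2 ^ k * levelFun A k r x) := fun k => by
    have := (levelFun_mem_Icc A k r x).1
    positivity
  set z := ‖expSum A x‖
  rcases le_or_gt z (1 / 2) with hsmall | hlarge
  · linarith [Finset.sum_nonneg fun k (_ : k ∈ Finset.range (Nat.log 2 A.card + 3)) => hnonneg k]
  have hzpos : 0 < z := by linarith
  obtain ⟨n, hn, hn'⟩ := exists_nat_pow_near
    ((one_le_div hzpos).mpr (norm_expSum_le A x)) one_lt_two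
  rw [le_div_iff₀ hzpos] at hn
  rw [div_lt_iff₀ hzpos] at hn'
  have hnlog : n ≤ Nat.log 2 A.card + 1 := by
    rw [← Nat.log_mul_base one_lt_two hA.card_pos.ne']
    refine Nat.le_log_of_pow_le one_lt_two ?_
    have : (2 : ℝ) ^ n ≤ A.card * 2 := by nlinarith [pow_pos (two_pos : (0 : ℝ) < 2) n]
    exact_mod_cast this
  have hlevel : (1 / 2) ^ r ≤ levelFun A (n + 1) r x :=
    half_pow_le_levelFun hA (div_le_of_le_mul₀ (by positivity) hzpos.le (by linarith))
  have hterm : z ≤ 2 ^ (r + 1) * (A.card / 2 ^ (n + 1) * levelFun A (n + 1) r x) := by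
    calc z ≤ A.card / 2 ^ n := by rwa [le_div_iff₀' (by positivity)]
      _ = 2 ^ (r + 1) * (A.card / 2 ^ (n + 1) * (1 / 2) ^ r) := by
          rw [one_div, inv_pow]
          field_simp
          ring
      _ ≤ _ := by gcongr
  have hsingle := Finset.single_le_sum (fun k _ => hnonneg k)
    (Finset.mem_range.mpr (by omega : n + 1 < Nat.log 2 A.card + 3))
  linarith

lemma exists_integral_norm_expSum_le_integral_levelFun (hA : A.Nonempty) (r : ℕ) :
    ∃ k ≤ Nat.log 2 A.card + 2, ∫ x, ‖expSum A x‖ ≤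
      2 ^ (r + 2) * (Nat.log 2 A.card + 3) * (A.card / 2 ^ k * ∫ x, levelFun A k r x) := by
  set L := Nat.log 2 A.card
  have hint : ∀ k, Integrable fun x => 2 ^ (r + 1) * (A.card / 2 ^ k * levelFun A k r x) :=
    fun k => integrable_unitAddCircle_of_continuous (by fun_prop)
  have hsum : ∫ x, ‖expSum A x‖ ≤ 1 / 2 + ∑ k ∈ Finset.range (L + 3),
      2 ^ (r + 1) * (A.card / 2 ^ k * ∫ x, levelFun A k r x) := by
    have h := integral_mono (integrable_unitAddCircle_of_continuous (by fun_prop))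
      (integrable_unitAddCircle_of_continuous (by fun_prop)) (norm_expSum_le_sum_levelFun hA r)
    rw [integral_add (integrable_const _) (integrable_finsetSum _ fun k _ => hint k),
      integral_finsetSum _ fun k _ => hint k] at h
    simpa [integral_const_mul, Measure.real] using h
  have hone := one_le_integral_norm_expSum hA
  obtain ⟨k, hk, hle⟩ := Finset.exists_le_of_sum_le (s := Finset.range (L + 3))
    (f := fun _ => (∫ x, ‖expSum A x‖) / (2 * (L + 3)))
    (g := fun k => 2 ^ (r + 1) * (A.card / 2 ^ k * ∫ x, levelFun A k r x))
    (by simp) (by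
      have hcancel : ((L + 3 : ℕ) : ℝ) * ((∫ x, ‖expSum A x‖) / (2 * (L + 3))) =
          (∫ x, ‖expSum A x‖) / 2 := by
        push_cast
        field_simp
      rw [Finset.sum_const, Finset.card_range, nsmul_eq_mul, hcancel]
      linarith)
  refine ⟨k, by have := Finset.mem_range.mp hk; omega, ?_⟩
  rw [div_le_iff₀ (by positivity)] at hle
  exact hle.trans_eq (by ring)

end LevelFunctions

section LargeDilates

variable {A : Finset ℤ} {k r : ℕ} {δ : ℝ}

lemma levelFun_le_rpow_neg_three {x : UnitAddCircle} (hA : A.Nonempty) (hr : 3 ≤ 2 * δ * r)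
    (hx : ‖expSum A x‖ ≤ A.card / 2 ^ k * (A.card : ℝ) ^ (-δ)) :
    levelFun A k r x ≤ (A.card : ℝ) ^ (-3 : ℝ) := by
  have hcard : (1 : ℝ) ≤ A.card := by exact_mod_cast hA.card_pos
  have hratio : ‖expSum A x‖ / (A.card / 2 ^ k) ≤ (A.card : ℝ) ^ (-δ) := by
    rwa [div_le_iff₀' (by positivity)]
  calc levelFun A k r x ≤ (‖expSum A x‖ / (A.card / 2 ^ k)) ^ (2 * r) := levelFun_le A k r x
    _ ≤ ((A.card : ℝ) ^ (-δ)) ^ (2 * r) := by gcongr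
    _ = (A.card : ℝ) ^ (-δ * (2 * r : ℕ)) := by
        rw [← Real.rpow_natCast, ← Real.rpow_mul (by positivity)]
    _ ≤ (A.card : ℝ) ^ (-3 : ℝ) := by
        refine Real.rpow_le_rpow_of_exponent_le hcard ?_
        push_cast
        linarith

lemma levelFun_le_half_of_norm_expSum_le {m : ℝ} {p : ℕ} {x : UnitAddCircle} (hA : 2 ≤ A.card)
    (hr : 3 ≤ 2 * δ * r) (hm : (A.card : ℝ) ^ (-2 : ℝ) ≤ m) (hp : p * m ≤ 6 * A.card ^ (3 * δ))
    (hx : ‖expSum A x‖ ≤ p * (A.card / 2 ^ k * m * (A.card : ℝ) ^ (-(4 * δ)) / 6)) :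
    levelFun A k r x ≤ m / 2 := by
  have hcard : (2 : ℝ) ≤ A.card := by exact_mod_cast hA
  have hsmall : ‖expSum A x‖ ≤ A.card / 2 ^ k * (A.card : ℝ) ^ (-δ) := by
    calc ‖expSum A x‖ ≤ A.card / 2 ^ k * (p * m / 6 * (A.card : ℝ) ^ (-(4 * δ))) :=
          hx.trans_eq (by ring)
      _ ≤ A.card / 2 ^ k * ((A.card : ℝ) ^ (3 * δ) * (A.card : ℝ) ^ (-(4 * δ))) := by
          gcongr
          linarith
      _ = A.card / 2 ^ k * (A.card : ℝ) ^ (-δ) := by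
          rw [← Real.rpow_add (by positivity)]
          ring_nf
  calc levelFun A k r x ≤ (A.card : ℝ) ^ (-3 : ℝ) :=
        levelFun_le_rpow_neg_three (Finset.card_pos.mp (by omega)) hr hsmall
    _ = (A.card : ℝ) ^ (-2 : ℝ) / A.card := by
        rw [← Real.rpow_sub_one (by positivity)]
        norm_num
    _ ≤ m / 2 := div_le_div₀ (le_trans (by positivity) hm) hm two_pos hcard

lemma exists_nat_rpow_le_mul_le {N m : ℝ} (hδ : δ ∈ Set.Icc 0 1) (hN : 6 ≤ N)
    (hm : m ∈ Set.Icc (N ^ (-2 : ℝ)) 1) :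
    ∃ H : ℕ, 5 ≤ H ∧ (H : ℝ) ≤ N ^ 6 ∧ N ^ (3 * δ) ≤ H * m ∧ H * m ≤ 6 * N ^ (3 * δ) := by
  have hmpos : 0 < m := (by positivity : 0 < N ^ (-2 : ℝ)).trans_le hm.1
  have hNδ : 1 ≤ N ^ (3 * δ) := Real.one_le_rpow (by linarith) (by linarith [hδ.1])
  have hle : 5 * N ^ (3 * δ) ≤ ⌈5 * N ^ (3 * δ) / m⌉₊ * m := by
    rw [← div_le_iff₀ hmpos]
    exact Nat.le_ceil _
  have hlt : (⌈5 * N ^ (3 * δ) / m⌉₊ : ℝ) < 5 * N ^ (3 * δ) / m + 1 :=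
    Nat.ceil_lt_add_one (by positivity)
  set H := ⌈5 * N ^ (3 * δ) / m⌉₊
  have hmul : H * m ≤ 6 * N ^ (3 * δ) := by
    have := mul_le_mul_of_nonneg_right hlt.le hmpos.le
    rw [add_mul, div_mul_cancel₀ _ hmpos.ne', one_mul] at this
    linarith [hm.2]
  have hH6 : (H : ℝ) ≤ N ^ 6 := by
    calc (H : ℝ) = H * N ^ (-2 : ℝ) * N ^ 2 := by
          rw [mul_assoc, ← Real.rpow_add_natCast (by positivity)]
          norm_num
      _ ≤ 6 * N ^ (3 * δ) * N ^ 2 := by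
          exact mul_le_mul_of_nonneg_right
            ((mul_le_mul_of_nonneg_left hm.1 (Nat.cast_nonneg _)).trans hmul) (by positivity)
      _ ≤ N * N ^ (3 : ℝ) * N ^ 2 := by
          gcongr <;> linarith [hδ.2]
      _ = N ^ 6 := by
          norm_cast
          ring
  have hH5 : (5 : ℝ) ≤ H := by nlinarith [mul_le_of_le_one_right (Nat.cast_nonneg H) hm.2]
  exact ⟨H, by exact_mod_cast hH5, hH6, by linarith, hmul⟩

lemma volume_forall_expSum_dilate_lt_level_le {B : ℕ} (hA : 6 ≤ A.card) (hB : ∀ n ∈ A, |n| ≤ B)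
    (hδ : δ ∈ Set.Icc 0 1) (hr : 3 ≤ 2 * δ * r)
    (hm : (A.card : ℝ) ^ (-2 : ℝ) ≤ ∫ x, levelFun A k r x) :
    volume {x | ∀ p : ℕ, p ≠ 0 → ‖expSum A (p • x)‖ <
        p * (A.card / 2 ^ k * (∫ y, levelFun A k r y) * (A.card : ℝ) ^ (-(4 * δ)) / 6)} ≤
      ENNReal.ofReal (96 * Nat.log 2 (A.card ^ 6 * (r * (4 ^ k * (2 * B)))) * Real.log A.card /
        (A.card : ℝ) ^ (3 * δ)) := by
  set N := A.card
  set m := ∫ y, levelFun A k r y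
  set J := r * (4 ^ k * (2 * B))
  have hmpos : 0 < m := lt_of_lt_of_le (by positivity) hm
  have hm1 : m ≤ 1 := by
    have h := integral_mono (integrable_unitAddCircle_of_continuous (by fun_prop))
      (integrable_const 1) fun x => (levelFun_mem_Icc A k r x).2
    simpa [Measure.real] using h
  obtain ⟨H, hH5, hH6, hH, hH'⟩ :=
    exists_nat_rpow_le_mul_le hδ (by exact_mod_cast hA : (6 : ℝ) ≤ N) ⟨hm, hm1⟩
  refine (measure_mono fun x hx p hp hpH => ?_).trans ((volume_forall_prime_dilate_le (H := H)
    (ofReal_levelFun_mem_trigPoly hB) (levelFun_mem_Icc A k r) hmpos hH5).trans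
    (ENNReal.ofReal_le_ofReal ?_))
  · have hpm : p * m ≤ H * m := by gcongr
    exact levelFun_le_half_of_norm_expSum_le (by omega) hr hm (hpm.trans hH') (hx p hp.ne_zero).le
  · have hlog : Real.log H ≤ 6 * Real.log N := by
      rw [← Nat.cast_ofNat, ← Real.log_pow]
      gcongr
    have := Real.log_natCast_nonneg N
    have hHN : H ≤ N ^ 6 := by exact_mod_cast hH6
    calc 16 * Nat.log 2 (H * J) * Real.log H / (H * m)
        ≤ 16 * Nat.log 2 (N ^ 6 * J) * (6 * Real.log N) / (N : ℝ) ^ (3 * δ) := by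
          gcongr
      _ = _ := by ring

lemma eventually_add_mul_log_pow_le_rpow (a b : ℝ) (m : ℕ) (hδ : 0 < δ) :
    ∀ᶠ N : ℕ in atTop, a + b * Real.log N ^ m ≤ (N : ℝ) ^ δ := by
  have ha : (fun _ => a) =o[atTop] fun x : ℝ => x ^ δ :=
    Asymptotics.isLittleO_const_left.mpr
      (Or.inr (tendsto_norm_atTop_atTop.comp (tendsto_rpow_atTop hδ)))
  have hlog : (fun x => Real.log x ^ m) =o[atTop] fun x : ℝ => x ^ δ := by
    simpa only [Real.rpow_natCast] using isLittleO_log_rpow_rpow_atTop (m : ℝ) hδ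
  have hbound := (ha.add (hlog.const_mul_left b)).bound one_pos
  filter_upwards [tendsto_natCast_atTop_atTop.eventually hbound] with N hN
  rw [one_mul, Real.norm_of_nonneg (by positivity : 0 ≤ (N : ℝ) ^ δ)] at hN
  exact (le_abs_self _).trans hN

lemma eventually_add_mul_log_le_rpow (a b : ℝ) (hδ : 0 < δ) :
    ∀ᶠ N : ℕ in atTop, a + b * Real.log N ≤ (N : ℝ) ^ δ := by
  simpa only [pow_one] using eventually_add_mul_log_pow_le_rpow a b 1 hδ

lemma natLog_two_degree_le {N B : ℕ} (hN : N ≠ 0) (hr : r ≠ 0) (hk : k ≤ Nat.log 2 N + 2)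
    (hB : (B : ℝ) ≤ Real.exp ((N : ℝ) ^ δ))
    (hlog : Real.log (32 * r) + 8 * Real.log N ≤ (N : ℝ) ^ δ) :
    (Nat.log 2 (N ^ 6 * (r * (4 ^ k * (2 * B)))) : ℝ) ≤ 4 * (N : ℝ) ^ δ := by
  have h4k : 4 ^ k ≤ 16 * N ^ 2 := by
    calc 4 ^ k ≤ 4 ^ (Nat.log 2 N + 2) := by gcongr; norm_num
      _ = 16 * (2 ^ Nat.log 2 N) ^ 2 := by rw [pow_add, ← pow_mul, mul_comm _ 2, pow_mul]; ring
      _ ≤ 16 * N ^ 2 := by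
          gcongr
          exact Nat.pow_log_le_self 2 hN
  have hdegree : ((N ^ 6 * (r * (4 ^ k * (2 * B))) : ℕ) : ℝ) ≤
      32 * r * N ^ 8 * Real.exp ((N : ℝ) ^ δ) := by
    have h4k' : (4 : ℝ) ^ k ≤ 16 * N ^ 2 := by exact_mod_cast h4k
    push_cast
    calc (N : ℝ) ^ 6 * (r * (4 ^ k * (2 * B)))
        ≤ N ^ 6 * (r * (16 * N ^ 2 * (2 * Real.exp ((N : ℝ) ^ δ)))) := by gcongr
      _ = _ := by ring
  refine (natLog_two_le_two_mul_log _).trans ?_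
  rcases Nat.eq_zero_or_pos (N ^ 6 * (r * (4 ^ k * (2 * B)))) with h0 | hpos
  · rw [h0, Nat.cast_zero, Real.log_zero, mul_zero]
    positivity
  have h := Real.log_le_log (by exact_mod_cast hpos) hdegree
  rw [Real.log_mul (by positivity) (by positivity), Real.log_mul (by positivity) (by positivity),
    Real.log_pow, Real.log_exp] at h
  push_cast at h ⊢
  linarith

lemma exists_rpow_mul_integral_norm_expSum_le_level (hA : A.Nonempty) (hδ : δ ≤ 1)
    (hlevel : 6 * (2 ^ (r + 2) * (Nat.log 2 A.card + 3)) ≤ (A.card : ℝ) ^ δ) :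
    ∃ k ≤ Nat.log 2 A.card + 2, (A.card : ℝ) ^ (-2 : ℝ) ≤ ∫ x, levelFun A k r x ∧
      6 * ((A.card : ℝ) ^ (-δ) * ∫ x, ‖expSum A x‖) ≤
        A.card / 2 ^ k * ∫ x, levelFun A k r x := by
  obtain ⟨k, hk, hμ⟩ := exists_integral_norm_expSum_le_integral_levelFun hA r
  have hcard : (1 : ℝ) ≤ A.card := by exact_mod_cast hA.card_pos
  have hone := one_le_integral_norm_expSum hA
  set μ := ∫ x, ‖expSum A x‖
  set m := ∫ x, levelFun A k r x
  have hm0 : 0 ≤ m := integral_nonneg fun x => (levelFun_mem_Icc A k r x).1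
  have hμm : 6 * μ ≤ (A.card : ℝ) ^ δ * (A.card / 2 ^ k * m) := by
    calc 6 * μ ≤ 6 * (2 ^ (r + 2) * (Nat.log 2 A.card + 3) * (A.card / 2 ^ k * m)) := by gcongr
      _ = 6 * (2 ^ (r + 2) * (Nat.log 2 A.card + 3)) * (A.card / 2 ^ k * m) := by ring
      _ ≤ _ := by gcongr
  refine ⟨k, hk, ?_, ?_⟩
  · rw [Real.rpow_neg (by positivity), inv_le_iff_one_le_mul₀' (by positivity)]
    calc 1 ≤ 6 * μ := by linarith
      _ ≤ (A.card : ℝ) ^ δ * (A.card / 2 ^ k * m) := hμm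
      _ ≤ (A.card : ℝ) ^ (1 : ℝ) * (A.card / 1 * m) := by
        gcongr
        exact one_le_pow₀ one_le_two
      _ = (A.card : ℝ) ^ (2 : ℝ) * m := by
        rw [Real.rpow_one, Real.rpow_two]
        ring
  · rw [Real.rpow_neg (by positivity), mul_left_comm, inv_mul_le_iff₀ (by positivity)]
    exact hμm

lemma volume_forall_expSum_dilate_lt_le (hA : 6 ≤ A.card)
    (hexp : ∀ n ∈ A, |(n : ℝ)| ≤ Real.exp ((A.card : ℝ) ^ δ)) (hδ : δ ∈ Set.Icc 0 1)
    (hr : 3 ≤ 2 * δ * r)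
    (hlevel : 6 * (2 ^ (r + 2) * (Nat.log 2 A.card + 3)) ≤ (A.card : ℝ) ^ δ)
    (hdegree : Real.log (32 * r) + 8 * Real.log A.card ≤ (A.card : ℝ) ^ δ)
    (hlog : 384 * Real.log A.card ≤ (A.card : ℝ) ^ δ) :
    volume {x | ∀ p : ℕ, p ≠ 0 → ‖expSum A (p • x)‖ <
        p * ((A.card : ℝ) ^ (-(5 * δ)) * ∫ y, ‖expSum A y‖)} ≤
      ENNReal.ofReal ((A.card : ℝ) ^ (-δ)) := by
  have : (6 : ℝ) ≤ A.card := by exact_mod_cast hA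
  have := Real.log_natCast_nonneg A.card
  obtain ⟨k, hk, hm, hμ⟩ := exists_rpow_mul_integral_norm_expSum_le_level
    (Finset.card_pos.mp (by omega)) hδ.2 hlevel
  have hB : ∀ n ∈ A, |n| ≤ ⌊Real.exp ((A.card : ℝ) ^ δ)⌋₊ := fun n hn => by
    rw [Int.natCast_floor_eq_floor (Real.exp_pos _).le, Int.le_floor, Int.cast_abs]
    exact hexp n hn
  have hr0 : r ≠ 0 := by
    rintro rfl
    norm_num at hr
  refine (measure_mono fun x hx p hp => (hx p hp).trans_le ?_).trans
    ((volume_forall_expSum_dilate_lt_level_le hA hB hδ hr hm).trans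
      (ENNReal.ofReal_le_ofReal ?_))
  · calc _ ≤ 96 * (4 * (A.card : ℝ) ^ δ) * Real.log A.card / (A.card : ℝ) ^ (3 * δ) := by
          gcongr
          exact natLog_two_degree_le (by omega) hr0 hk (Nat.floor_le (by positivity)) hdegree
      _ = (A.card : ℝ) ^ δ * (384 * Real.log A.card) / (A.card : ℝ) ^ (3 * δ) := by ring
      _ ≤ (A.card : ℝ) ^ δ * (A.card : ℝ) ^ δ / (A.card : ℝ) ^ (3 * δ) := by gcongr
      _ = (A.card : ℝ) ^ (-δ) := by
          rw [← Real.rpow_add (by positivity), ← Real.rpow_sub (by positivity)]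
          ring_nf
  · refine mul_le_mul_of_nonneg_left ?_ (Nat.cast_nonneg _)
    rw [show -(5 * δ) = -(4 * δ) + -δ by ring, Real.rpow_add (by positivity)]
    have := mul_le_mul_of_nonneg_left hμ (by positivity : 0 ≤ (A.card : ℝ) ^ (-(4 * δ)))
    linarith

lemma eventually_volume_forall_expSum_dilate_lt_le (hδ : δ ∈ Set.Ioc 0 1) :
    ∀ᶠ N : ℕ in atTop, ∀ A : Finset ℤ, A.card = N →
      (∀ n ∈ A, |(n : ℝ)| ≤ Real.exp ((N : ℝ) ^ δ)) →
      volume {x | ∀ p : ℕ, p ≠ 0 → ‖expSum A (p • x)‖ <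
          p * ((N : ℝ) ^ (-(5 * δ)) * ∫ y, ‖expSum A y‖)} ≤
        ENNReal.ofReal ((N : ℝ) ^ (-δ)) := by
  set r := ⌈2 / δ⌉₊
  have hr : 2 ≤ δ * r := by
    rw [← div_le_iff₀' hδ.1]
    exact Nat.le_ceil _
  filter_upwards [eventually_ge_atTop 6,
    eventually_add_mul_log_le_rpow (6 * (2 ^ (r + 2) * 3)) (6 * (2 ^ (r + 2) * 2)) hδ.1,
    eventually_add_mul_log_le_rpow (Real.log (32 * r)) 8 hδ.1,
    eventually_add_mul_log_le_rpow 0 384 hδ.1] with N hN hlevel hdegree hlog A hcard hexp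
  subst hcard
  refine volume_forall_expSum_dilate_lt_le hN hexp ⟨hδ.1.le, hδ.2⟩ (by linarith) ?_ hdegree
    (by linarith)
  calc 6 * (2 ^ (r + 2) * ((Nat.log 2 A.card : ℝ) + 3))
      ≤ 6 * (2 ^ (r + 2) * (2 * Real.log A.card + 3)) := by
        gcongr
        exact natLog_two_le_two_mul_log _
    _ ≤ (A.card : ℝ) ^ δ := by linarith

end LargeDilates

section Koksma

variable {N : ℕ} {x : ℕ → ℝ} {E : Type*} [NormedAddCommGroup E] [NormedSpace ℝ E] [CompleteSpace E]
  {f f' : ℝ → E}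

lemma abs_card_sub_le_starDisc (N : ℕ) (hx : ∀ n, 0 ≤ x n) {β : ℝ} (hβ : β ∈ Set.Ioc (0 : ℝ) 1) :
    |(((Finset.Icc 1 N).filter fun n => x n < β).card : ℝ) - N * β| ≤ N * starDisc N x := by
  rcases Nat.eq_zero_or_pos N with rfl | hN
  · simp
  have hNR : (0 : ℝ) < N := by exact_mod_cast hN
  have hbdd : BddAbove (Set.range fun β : Set.Ioc (0 : ℝ) 1 =>
      |(((Finset.Icc 1 N).filter fun n => 0 ≤ x n ∧ x n < (β : ℝ)).card : ℝ) / N - (β : ℝ)|) := by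
    refine ⟨1, ?_⟩
    rintro _ ⟨⟨b, hb0, hb1⟩, rfl⟩
    have hcard : (((Finset.Icc 1 N).filter fun n => 0 ≤ x n ∧ x n < b).card : ℝ) ≤ N := by
      exact_mod_cast (Finset.card_filter_le _ _).trans (by simp)
    exact abs_sub_le_of_nonneg_of_le (by positivity) ((div_le_one hNR).mpr hcard) hb0.le hb1
  have hle := le_ciSup hbdd ⟨β, hβ⟩
  simp only [hx, true_and] at hle
  calc |(((Finset.Icc 1 N).filter fun n => x n < β).card : ℝ) - N * β|
      = N * |(((Finset.Icc 1 N).filter fun n => x n < β).card : ℝ) / N - β| := by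
        rw [← abs_of_pos hNR, ← abs_mul, abs_of_pos hNR, mul_sub, mul_div_cancel₀ _ hNR.ne']
    _ ≤ N * starDisc N x := by
        gcongr
        simpa only [starDisc, hx, true_and] using hle

lemma integral_indicator_Ioi_eq_sub (hf : ∀ t ∈ Set.Icc (0 : ℝ) 1, HasDerivAt f (f' t) t)
    (hf' : IntervalIntegrable f' volume 0 1) {t : ℝ} (ht : t ∈ Set.Icc (0 : ℝ) 1) :
    ∫ β in (0 : ℝ)..1, (Set.Ioi t).indicator f' β = f 1 - f t := by
  have hsub : Set.uIcc t 1 ⊆ Set.Icc 0 1 := by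
    rw [Set.uIcc_of_le ht.2]
    exact Set.Icc_subset_Icc_left ht.1
  rw [← intervalIntegral.integral_eq_sub_of_hasDerivAt (fun y hy => hf y (hsub hy))
      (hf'.mono_set (hsub.trans_eq (Set.uIcc_of_le zero_le_one).symm)),
    intervalIntegral.integral_of_le zero_le_one, intervalIntegral.integral_of_le ht.2,
    setIntegral_indicator measurableSet_Ioi, Set.Ioc_inter_Ioi, max_eq_right ht.1]

lemma integral_id_smul_deriv_eq_sub (hf : ∀ t ∈ Set.Icc (0 : ℝ) 1, HasDerivAt f (f' t) t)
    (hf' : IntervalIntegrable f' volume 0 1) :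
    ∫ β in (0 : ℝ)..1, β • f' β = f 1 - ∫ t in (0 : ℝ)..1, f t := by
  have h := intervalIntegral.integral_smul_deriv_eq_deriv_smul
    (fun t _ => hasDerivAt_id (t : ℝ)) (by rwa [Set.uIcc_of_le zero_le_one])
    (intervalIntegrable_const (c := (1 : ℝ))) hf'
  simpa using h

lemma sum_sub_smul_integral_eq_integral_smul
    (hf : ∀ t ∈ Set.Icc (0 : ℝ) 1, HasDerivAt f (f' t) t) (hf' : IntervalIntegrable f' volume 0 1)
    (hx : ∀ n, x n ∈ Set.Icc (0 : ℝ) 1) :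
    ∑ n ∈ Finset.Icc 1 N, f (x n) - (N : ℝ) • ∫ t in (0 : ℝ)..1, f t =
      ∫ β in (0 : ℝ)..1, (N * β - ((Finset.Icc 1 N).filter fun n => x n < β).card) • f' β := by
  have hind : ∀ n, IntervalIntegrable ((Set.Ioi (x n)).indicator f') volume 0 1 := fun n =>
    ⟨hf'.1.indicator measurableSet_Ioi, hf'.2.indicator measurableSet_Ioi⟩
  have hsmul : IntervalIntegrable (fun β => (N : ℝ) • β • f' β) volume 0 1 :=
    (hf'.continuousOn_smul continuousOn_id).smul (N : ℝ)
  have hsum : IntervalIntegrable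
      (fun β => ∑ n ∈ Finset.Icc 1 N, (Set.Ioi (x n)).indicator f' β) volume 0 1 := by
    simpa only [Finset.sum_fn] using IntervalIntegrable.sum (Finset.Icc 1 N) fun n _ => hind n
  calc ∑ n ∈ Finset.Icc 1 N, f (x n) - (N : ℝ) • ∫ t in (0 : ℝ)..1, f t
      = (N : ℝ) • (f 1 - ∫ t in (0 : ℝ)..1, f t) - ∑ n ∈ Finset.Icc 1 N, (f 1 - f (x n)) := by
        rw [Finset.sum_sub_distrib, Finset.sum_const, Nat.card_Icc, Nat.add_sub_cancel,
          ← Nat.cast_smul_eq_nsmul ℝ]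
        module
    _ = ∫ β in (0 : ℝ)..1, ((N : ℝ) • β • f' β -
          ∑ n ∈ Finset.Icc 1 N, (Set.Ioi (x n)).indicator f' β) := by
        rw [intervalIntegral.integral_sub hsmul hsum, intervalIntegral.integral_smul,
          intervalIntegral.integral_finsetSum fun n _ => hind n,
          integral_id_smul_deriv_eq_sub hf hf']
        simp_rw [fun n => integral_indicator_Ioi_eq_sub hf hf' (hx n)]
    _ = _ := by
        refine intervalIntegral.integral_congr fun β _ => ?_
        simp only [Set.indicator_apply, Set.mem_Ioi]
        rw [← Finset.sum_filter, Finset.sum_const, ← Nat.cast_smul_eq_nsmul ℝ]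
        module

theorem norm_sum_sub_smul_integral_le_starDisc
    (hf : ∀ t ∈ Set.Icc (0 : ℝ) 1, HasDerivAt f (f' t) t) (hf' : IntervalIntegrable f' volume 0 1)
    (hx : ∀ n, x n ∈ Set.Icc (0 : ℝ) 1) :
    ‖∑ n ∈ Finset.Icc 1 N, f (x n) - (N : ℝ) • ∫ t in (0 : ℝ)..1, f t‖ ≤
      N * starDisc N x * ∫ t in (0 : ℝ)..1, ‖f' t‖ := by
  rw [sum_sub_smul_integral_eq_integral_smul hf hf' hx, ← intervalIntegral.integral_const_mul]
  refine intervalIntegral.norm_integral_le_of_norm_le zero_le_one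
    (ae_of_all _ fun β hβ => ?_) (hf'.norm.const_mul _)
  rw [norm_smul, Real.norm_eq_abs, abs_sub_comm]
  gcongr
  exact abs_card_sub_le_starDisc N (fun n => (hx n).1) hβ

lemma norm_sum_fourier_le_starDisc {h : ℤ} (hh : h ≠ 0) (hx : ∀ n, x n ∈ Set.Icc (0 : ℝ) 1) :
    ‖∑ n ∈ Finset.Icc 1 N, fourier h (x n : UnitAddCircle)‖ ≤
      2 * Real.pi * |(h : ℝ)| * (N * starDisc N x) := by
  have hint : ∫ t in (0 : ℝ)..1, fourier h (t : UnitAddCircle) = 0 := by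
    have := UnitAddCircle.intervalIntegral_preimage 0 (fourier h : UnitAddCircle → ℂ)
    rw [zero_add] at this
    rw [this, integral_fourier, if_neg hh]
  have hcont : Continuous fun t : ℝ =>
      2 * Real.pi * Complex.I * h / (1 : ℝ) * fourier h (t : UnitAddCircle) := by fun_prop
  have hkoksma := norm_sum_sub_smul_integral_le_starDisc (N := N)
    (fun t _ => hasDerivAt_fourier 1 h t) (hcont.intervalIntegrable 0 1) hx
  rw [hint, smul_zero, sub_zero] at hkoksma
  refine hkoksma.trans_eq ?_
  simp_rw [norm_mul, norm_fourier_apply]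
  simp [abs_of_pos Real.pi_pos]
  ring

lemma norm_expSum_nsmul_le_starDisc {a : ℕ → ℤ} (ha : Set.InjOn a (Set.Ici 1)) (N : ℕ) {p : ℕ}
    (hp : p ≠ 0) (α : ℝ) :
    ‖expSum ((Finset.Icc 1 N).image a) (p • (α : UnitAddCircle))‖ ≤
      2 * Real.pi * p * (N * starDisc N fun n => Int.fract ((a n : ℝ) * α)) := by
  have hfract : ∀ n, ((Int.fract ((a n : ℝ) * α) : ℝ) : UnitAddCircle) =
      a n • (α : UnitAddCircle) := fun n => by
    rw [AddCircle.coe_fract, ← zsmul_eq_mul, AddCircle.coe_zsmul]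
  have hsum : expSum ((Finset.Icc 1 N).image a) (p • (α : UnitAddCircle)) =
      ∑ n ∈ Finset.Icc 1 N,
        fourier (p : ℤ) ((Int.fract ((a n : ℝ) * α) : ℝ) : UnitAddCircle) := by
    rw [expSum, Finset.sum_image (ha.mono fun n hn => (Finset.mem_Icc.mp hn).1)]
    refine Finset.sum_congr rfl fun n _ => ?_
    rw [fourier_nsmul, hfract, fourier_apply, fourier_apply, smul_smul]
  rw [hsum]
  exact (norm_sum_fourier_le_starDisc (by exact_mod_cast hp) fun n =>
    ⟨Int.fract_nonneg _, (Int.fract_lt_one _).le⟩).trans_eq (by simp)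

end Koksma

section AlmostEverywhere

lemma ae_frequently_and_notMem {X : Type*} [MeasurableSpace X] {μ : Measure X} {s : ℕ → Set X}
    {P : ℕ → Prop} (hP : ∃ᶠ n in atTop, P n) (hs : Tendsto (fun n => μ (s n)) atTop (nhds 0)) :
    ∀ᵐ x ∂μ, ∃ᶠ n in atTop, P n ∧ x ∉ s n := by
  simp_rw [frequently_atTop]
  refine ae_all_iff.mpr fun m => ?_
  rw [ae_iff, ← nonpos_iff_eq_zero]
  refine ge_of_tendsto_of_frequently hs
    ((hP.and_eventually (eventually_ge_atTop m)).mono fun n hn => measure_mono fun x hx => ?_)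
  by_contra hxn
  exact hx ⟨n, hn.2, hn.1, hxn⟩

lemma ae_coe_of_ae_addCircle {T : ℝ} [hT : Fact (0 < T)] {P : AddCircle T → Prop}
    (hP : ∀ᵐ x, P x) : ∀ᵐ α : ℝ, P α := by
  rw [← Measure.restrict_univ (μ := (volume : Measure ℝ)), ← iUnion_Ioc_zsmul hT.out,
    ae_restrict_iUnion_iff]
  intro n
  rw [add_smul, one_smul]
  exact (AddCircle.measurePreserving_mk T (n • T)).quasiMeasurePreserving.ae hP

lemma eventually_forall_le_le_of_monotone {f g : ℕ → ℝ} (hfg : ∀ᶠ n in atTop, f n ≤ g n)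
    (hg : Monotone g) (hg' : Tendsto g atTop atTop) : ∀ᶠ N in atTop, ∀ n ≤ N, f n ≤ g N := by
  obtain ⟨n₀, hn₀⟩ := eventually_atTop.mp hfg
  filter_upwards [(eventually_all_finset (Finset.range n₀)).mpr
    fun n _ => hg'.eventually_ge_atTop (f n)] with N hN n hnN
  rcases lt_or_ge n n₀ with hn | hn
  · exact hN n (Finset.mem_range.mpr hn)
  · exact (hn₀ n hn).trans (hg hnN)

lemma card_image_Icc_of_injOn {a : ℕ → ℤ} (ha : Set.InjOn a (Set.Ici 1)) (N : ℕ) :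
    ((Finset.Icc 1 N).image a).card = N := by
  rw [Finset.card_image_of_injOn (ha.mono fun n hn => (Finset.mem_Icc.mp hn).1), Nat.card_Icc,
    Nat.add_sub_cancel]

lemma ae_frequently_exists_le_norm_expSum_nsmul {a : ℕ → ℤ} (ha : Set.InjOn a (Set.Ici 1)) {δ : ℝ}
    (hδ : δ ∈ Set.Ioc 0 1) (hgrowth : ∀ᶠ n : ℕ in atTop, |(a n : ℝ)| ≤ Real.exp ((n : ℝ) ^ δ))
    {P : ℕ → Prop} (hP : ∃ᶠ N in atTop, P N) :
    ∀ᵐ x : UnitAddCircle, ∃ᶠ N : ℕ in atTop, P N ∧ ∃ p : ℕ, p ≠ 0 ∧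
      p * ((N : ℝ) ^ (-(5 * δ)) * ∫ y, ‖expSum ((Finset.Icc 1 N).image a) y‖) ≤
        ‖expSum ((Finset.Icc 1 N).image a) (p • x)‖ := by
  have htop : Tendsto (fun N : ℕ => (N : ℝ) ^ δ) atTop atTop :=
    (tendsto_rpow_atTop hδ.1).comp tendsto_natCast_atTop_atTop
  have hzero : Tendsto (fun N : ℕ => ENNReal.ofReal ((N : ℝ) ^ (-δ))) atTop (nhds 0) := by
    rw [← ENNReal.ofReal_zero]
    exact ENNReal.tendsto_ofReal ((tendsto_rpow_neg_atTop hδ.1).comp tendsto_natCast_atTop_atTop)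
  have hexp : ∀ᶠ N : ℕ in atTop, ∀ n ≤ N, |(a n : ℝ)| ≤ Real.exp ((N : ℝ) ^ δ) :=
    eventually_forall_le_le_of_monotone hgrowth
      (fun m n hmn => Real.exp_le_exp.mpr
        (Real.rpow_le_rpow m.cast_nonneg (Nat.cast_le.mpr hmn) hδ.1.le))
      (Real.tendsto_exp_atTop.comp htop)
  have hvolume := tendsto_of_tendsto_of_tendsto_of_le_of_le' tendsto_const_nhds hzero
    (Eventually.of_forall fun N => zero_le (a := volume {x | ∀ p : ℕ, p ≠ 0 →
      ‖expSum ((Finset.Icc 1 N).image a) (p • x)‖ <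
        p * ((N : ℝ) ^ (-(5 * δ)) * ∫ y, ‖expSum ((Finset.Icc 1 N).image a) y‖)}))
    (by
      filter_upwards [eventually_volume_forall_expSum_dilate_lt_le hδ, hexp] with N hN hexpN
      refine hN _ (card_image_Icc_of_injOn ha N) fun n hn => ?_
      obtain ⟨i, hi, rfl⟩ := Finset.mem_image.mp hn
      exact hexpN i (Finset.mem_Icc.mp hi).2)
  filter_upwards [ae_frequently_and_notMem hP hvolume] with x hx
  simpa only [Set.mem_ofPred_eq, not_forall, not_lt, exists_prop] using hx

end AlmostEverywhere

section Discrepancy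

lemma rpow_le_integral_norm_expSum {A : Finset ℤ} (hA : A.Nonempty) {s : ℝ}
    (hs : (addEnergy A : ℝ) ≤ (A.card : ℝ) ^ s) :
    (A.card : ℝ) ^ ((3 - s) / 2) ≤ ∫ x, ‖expSum A x‖ := by
  have hcard : (0 : ℝ) < A.card := by exact_mod_cast hA.card_pos
  refine le_of_sq_le_sq ?_ (integral_nonneg fun x => norm_nonneg _)
  rw [← Real.rpow_mul_natCast hcard.le, Nat.cast_ofNat, div_mul_cancel₀ _ two_ne_zero,
    Real.rpow_sub hcard, div_le_iff₀' (by positivity)]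
  calc (A.card : ℝ) ^ (3 : ℝ) = (A.card : ℝ) ^ 3 := by norm_cast
    _ ≤ addEnergy A * (∫ x, ‖expSum A x‖) ^ 2 :=
        card_pow_three_le_addEnergy_mul_sq_integral_norm_expSum A
    _ ≤ (A.card : ℝ) ^ s * (∫ x, ‖expSum A x‖) ^ 2 := by gcongr

lemma rpow_le_mul_starDisc {a : ℕ → ℤ} (ha : Set.InjOn a (Set.Ici 1)) {N p : ℕ} (hN : N ≠ 0)
    (hp : p ≠ 0) {s δ α : ℝ} (hδ : 2 * Real.pi ≤ (N : ℝ) ^ δ)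
    (henergy : (addEnergy ((Finset.Icc 1 N).image a) : ℝ) ≤ (N : ℝ) ^ s)
    (hdilate : p * ((N : ℝ) ^ (-(5 * δ)) * ∫ y, ‖expSum ((Finset.Icc 1 N).image a) y‖) ≤
      ‖expSum ((Finset.Icc 1 N).image a) (p • (α : UnitAddCircle))‖) :
    (N : ℝ) ^ ((3 - s) / 2 - 6 * δ) ≤ N * starDisc N fun n => Int.fract ((a n : ℝ) * α) := by
  set D := N * starDisc N fun n => Int.fract ((a n : ℝ) * α)
  have hN0 : (0 : ℝ) < N := by exact_mod_cast Nat.pos_of_ne_zero hN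
  have hp0 : (0 : ℝ) < p := by exact_mod_cast Nat.pos_of_ne_zero hp
  have hcard := card_image_Icc_of_injOn ha N
  have hA : ((Finset.Icc 1 N).image a).Nonempty :=
    Finset.card_pos.mp (hcard.symm ▸ Nat.pos_of_ne_zero hN)
  have hL1 := rpow_le_integral_norm_expSum (s := s) hA (by rwa [hcard])
  rw [hcard] at hL1
  have hpD : p * (N : ℝ) ^ ((3 - s) / 2 - 5 * δ) ≤ p * (2 * Real.pi * D) := by
    calc p * (N : ℝ) ^ ((3 - s) / 2 - 5 * δ)
        = p * ((N : ℝ) ^ (-(5 * δ)) * (N : ℝ) ^ ((3 - s) / 2)) := by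
          rw [← Real.rpow_add hN0, neg_add_eq_sub]
      _ ≤ p * ((N : ℝ) ^ (-(5 * δ)) * ∫ y, ‖expSum ((Finset.Icc 1 N).image a) y‖) := by gcongr
      _ ≤ 2 * Real.pi * p * D := hdilate.trans (norm_expSum_nsmul_le_starDisc ha N hp α)
      _ = p * (2 * Real.pi * D) := by ring
  have hD : 0 ≤ D := mul_nonneg hN0.le (Real.iSup_nonneg fun _ => abs_nonneg _)
  calc (N : ℝ) ^ ((3 - s) / 2 - 6 * δ) = (N : ℝ) ^ ((3 - s) / 2 - 5 * δ) / (N : ℝ) ^ δ := by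
        rw [← Real.rpow_sub hN0]
        ring_nf
    _ ≤ D := by
        rw [div_le_iff₀' (by positivity)]
        exact (le_of_mul_le_mul_left hpD hp0).trans (by gcongr)

theorem ae_frequently_rpow_le_mul_starDisc {a : ℕ → ℤ} (ha : Set.InjOn a (Set.Ici 1))
    (hgrowth : ∀ δ : ℝ, 0 < δ → ∀ᶠ n : ℕ in atTop, |(a n : ℝ)| ≤ Real.exp ((n : ℝ) ^ δ)) {κ : ℝ}
    (henergy : ∀ δ : ℝ, 0 < δ → ∃ᶠ N : ℕ in atTop,
      (addEnergy ((Finset.Icc 1 N).image a) : ℝ) ≤ (N : ℝ) ^ (κ + δ)) {ε : ℝ} (hε : 0 < ε) :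
    ∀ᵐ α : ℝ, ∃ᶠ N : ℕ in atTop,
      (N : ℝ) * starDisc N (fun n => Int.fract ((a n : ℝ) * α)) ≥
        (N : ℝ) ^ ((3 - κ) / 2 - ε) := by
  set δ := min (ε / 7) 1
  have hδ0 : 0 < δ := by positivity
  filter_upwards [ae_coe_of_ae_addCircle (ae_frequently_exists_le_norm_expSum_nsmul ha
    ⟨hδ0, min_le_right _ _⟩ (hgrowth δ hδ0) (henergy δ hδ0))] with α hα
  have hpi : ∀ᶠ N : ℕ in atTop, 2 * Real.pi ≤ (N : ℝ) ^ δ := by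
    simpa using eventually_add_mul_log_le_rpow (2 * Real.pi) 0 hδ0
  refine (hα.and_eventually (hpi.and (eventually_ge_atTop 1))).mono ?_
  rintro N ⟨⟨hN, p, hp, hdilate⟩, hpiN, hN1⟩
  refine (Real.rpow_le_rpow_of_exponent_le (by exact_mod_cast hN1) ?_).trans
    (rpow_le_mul_starDisc ha (by omega) hp hpiN hN hdilate)
  linarith [min_le_left (ε / 7) 1]

theorem stmt0_general {a : ℕ → ℤ} (ha : Set.InjOn a (Set.Ici 1))
    (hgrowth : ∀ δ : ℝ, 0 < δ → ∀ᶠ n : ℕ in atTop, |(a n : ℝ)| ≤ Real.exp ((n : ℝ) ^ δ)) {κ : ℝ}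
    (henergy : ∀ δ : ℝ, 0 < δ → ∃ᶠ N : ℕ in atTop,
      (addEnergy ((Finset.Icc 1 N).image a) : ℝ) ≤ (N : ℝ) ^ (κ + δ)) :
    ∀ᵐ α : ℝ, ∀ ε > 0, ∃ᶠ N : ℕ in atTop,
      (N : ℝ) * starDisc N (fun n => Int.fract ((a n : ℝ) * α)) ≥
        (N : ℝ) ^ ((3 - κ) / 2 - ε) := by
  filter_upwards [ae_all_iff.mpr fun m : ℕ => ae_frequently_rpow_le_mul_starDisc ha hgrowth henergy
    (Nat.one_div_pos_of_nat (α := ℝ) (n := m))] with α hα ε hε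
  obtain ⟨m, hm⟩ := exists_nat_one_div_lt hε
  refine ((hα m).and_eventually (eventually_ge_atTop 1)).mono fun N hN => ?_
  exact le_trans (Real.rpow_le_rpow_of_exponent_le (by exact_mod_cast hN.2) (by linarith)) hN.1

lemma injOn_intCast_of_forall_lt_succ {a : ℕ → ℕ} (ha : ∀ n : ℕ, 1 ≤ n → a n < a (n + 1)) :
    Set.InjOn (fun n => (a n : ℤ)) (Set.Ici 1) :=
  Nat.cast_injective.comp_injOn
    (strictMonoOn_of_lt_succ Set.ordConnected_Ici fun n _ hn _ => ha n hn).injOn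

lemma eventually_le_exp_rpow_of_le_mul_exp_log_sq {f : ℕ → ℝ} {C γ : ℝ}
    (hf : ∀ᶠ n : ℕ in atTop, f n ≤ C * Real.exp (γ * Real.log n ^ 2)) {δ : ℝ} (hδ : 0 < δ) :
    ∀ᶠ n : ℕ in atTop, f n ≤ Real.exp ((n : ℝ) ^ δ) := by
  filter_upwards [hf, eventually_add_mul_log_pow_le_rpow (Real.log C) γ 2 hδ] with n hn hlog
  calc f n ≤ C * Real.exp (γ * Real.log n ^ 2) := hn
    _ ≤ Real.exp (Real.log C) * Real.exp (γ * Real.log n ^ 2) := by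
        gcongr
        exact Real.le_exp_log C
    _ ≤ Real.exp ((n : ℝ) ^ δ) := by
        rw [← Real.exp_add]
        exact Real.exp_le_exp.mpr hlog

lemma eventually_le_rpow_add_of_le_mul_rpow {f : ℕ → ℝ} {C κ : ℝ}
    (hf : ∀ᶠ n : ℕ in atTop, f n ≤ C * (n : ℝ) ^ κ) {δ : ℝ} (hδ : 0 < δ) :
    ∀ᶠ n : ℕ in atTop, f n ≤ (n : ℝ) ^ (κ + δ) := by
  filter_upwards [hf, eventually_add_mul_log_le_rpow C 0 hδ, eventually_gt_atTop 0]
    with n hn hC hpos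
  refine hn.trans ?_
  rw [Real.rpow_add (by exact_mod_cast hpos), mul_comm]
  gcongr
  linarith

end Discrepancy

theorem stmt0 (a : ℕ → ℕ)
    (ha_incr : ∀ n : ℕ, 1 ≤ n → a n < a (n + 1))
    (ha_pos : ∀ n : ℕ, 1 ≤ n → 0 < a n)
    (γ C : ℝ) (hγ : 0 < γ) (hC : 0 < C)
    (hgrowth : ∀ n : ℕ, 1 ≤ n → (a n : ℝ) ≤ C * Real.exp (γ * (Real.log n) ^ 2))
    (κ : ℝ) (hκ : κ ∈ Set.Icc (2 : ℝ) 3) (C' : ℝ) (hC' : 0 < C')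
    (henergy : ∀ N : ℕ, 1 ≤ N →
      (addEnergy ((Finset.Icc 1 N).image fun n => (a n : ℤ)) : ℝ) ≤ C' * (N : ℝ) ^ κ) :
    ∀ᵐ α ∂(volume : Measure ℝ), ∀ ε > 0, ∃ᶠ N : ℕ in atTop,
      (N : ℝ) * starDisc N (fun n => Int.fract ((a n : ℝ) * α)) ≥
        (N : ℝ) ^ ((3 - κ) / 2 - ε) := by
  exact stmt0_general (injOn_intCast_of_forall_lt_succ ha_incr)
    (fun _ => eventually_le_exp_rpow_of_le_mul_exp_log_sq
      (eventually_atTop.mpr ⟨1, by simpa using hgrowth⟩))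
    fun _ hδ => (eventually_le_rpow_add_of_le_mul_rpow
      (eventually_atTop.mpr ⟨1, henergy⟩) hδ).frequently
end

section
/- Let (a_n)_{n≥1} be a strictly increasing sequence of positive integers such that there exist constants γ > 0 and C > 0 with a_n ≤ C·e^{γ(log n)²} for all n ≥ 1, and assume that for every ε > 0 there is a constant C_ε with E({a_1, …, a_N}) ≤ C_ε·N^{2+ε} for all N ≥ 1. Then for Lebesgue-almost all real α, both of the following hold: (i) for every ε > 0 there exists C'_ε with N·D_N*({a_1 α}, …, {a_N α}) ≤ C'_ε·N^{1/2+ε} for all N; (ii) for every ε > 0 there are infinitely many N with N·D_N*({a_1 α}, …, {a_N α}) ≥ N^{1/2−ε}. -/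
open Filter MeasureTheory

/-! Let `e(x) = exp(2πix)` and `S(h, N, t) = ∑ n ≤ N, e(h aₙ t)`.

Upper bound: comparing the periodised Bernoulli polynomial `B₂` at points at distance `δ` bounds the
sawtooth sums `∑ ({aₙ t - β} - 1/2)` uniformly in `β` by `∑ |S(h, N, t)| h ^ (-1 - η)`, up to
`δ ^ (-η)` and an error `N δ`. By orthogonality the mean square of `S(h, N, ·)` over a period is
`N`, and the Rademacher–Menshov dyadic decomposition makes this uniform in `N`, so the weighted sums
are almost surely `O(N ^ (1/2 + ε))`.

Lower bound: by Koksma's inequality `N D_N` is at least `|S(p, N, t)| / (2πp)`. Average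
`|S(p, N, t)|²` over the primes `p ≤ k²` with `N = k ^ m`. The diagonal contributes `N`. The
off-diagonal part is a trigonometric polynomial with frequencies `p v`, where `v` is a nonzero
difference; such a frequency has few representations, since `p v = q w` with `q ≠ p` forces `q ∣ v`
and `v` has `O(log |v|)` prime factors. Its mean square is therefore at most the additive energy
times a factor that leaves it summable in `k` after normalisation, so almost surely some `p ≤ k²`
has `|S(p, N, t)|² ≥ N / 2`. With `m` large compared with `1 / ε`, the loss `k²` is negligible. -/

section

open Finset hiding addEnergy
open Complex Real
open scoped FourierTransform Pointwise

/-! ### Mean values of trigonometric polynomials -/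

lemma fourierChar_intCast (k : ℤ) : 𝐞 (k : ℝ) = 1 := by
  apply Circle.ext
  rw [Real.fourierChar_apply, Circle.coe_one, Complex.exp_eq_one_iff]
  exact ⟨k, by push_cast; ring⟩

lemma fourierChar_natCast_mul_fract (h : ℕ) (x : ℝ) : 𝐞 (h * Int.fract x) = 𝐞 (h * x) := by
  have hx : (h : ℝ) * x = h * Int.fract x + ((h * ⌊x⌋ : ℤ) : ℝ) := by
    push_cast
    rw [← mul_add, Int.fract_add_floor]
  rw [hx, AddChar.map_add_eq_mul, fourierChar_intCast, mul_one]

lemma fourierChar_re (x : ℝ) : (𝐞 x : ℂ).re = Real.cos (2 * π * x) := by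
  rw [Real.fourierChar_apply, Complex.exp_ofReal_mul_I_re]

@[fun_prop]
lemma continuous_coe_fourierChar : Continuous fun x : ℝ => (𝐞 x : ℂ) :=
  continuous_subtype_val.comp Real.continuous_fourierChar

lemma hasDerivAt_fourierChar_mul (c x : ℝ) :
    HasDerivAt (fun t : ℝ => (𝐞 (c * t) : ℂ)) (c * (2 * π * I * 𝐞 (c * x))) x :=
  (Real.hasDerivAt_fourierChar (c * x)).scomp x (hasDerivAt_const_mul c)

lemma integral_fourierChar_mul (k : ℤ) (c : ℝ) :
    ∫ t in c..c + 1, (𝐞 (k * t) : ℂ) = if k = 0 then 1 else 0 := by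
  split_ifs with hk
  · simp [hk]
  have hderiv (t : ℝ) : HasDerivAt (fun t : ℝ => (𝐞 (k * t) : ℂ) / ((k : ℝ) * (2 * π * I)))
      (𝐞 (k * t)) t := by
    convert! (hasDerivAt_fourierChar_mul k t).div_const ((k : ℝ) * (2 * π * I)) using 1
    have hne : ((k : ℝ) * (2 * π * I) : ℂ) ≠ 0 := by simp [hk, Real.pi_ne_zero]
    rw [← mul_assoc, mul_div_cancel_left₀ _ hne]
  rw [intervalIntegral.integral_eq_sub_of_hasDerivAt (fun t _ => hderiv t)
    (Continuous.intervalIntegrable (by fun_prop) _ _)]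
  rw [mul_add_one, AddChar.map_add_eq_mul, fourierChar_intCast, mul_one, sub_self]

lemma integral_norm_sq_sum_mul_fourierChar (s : Finset ℤ) (d : ℤ → ℂ) (c : ℝ) :
    ∫ t in c..c + 1, ‖∑ v ∈ s, d v * 𝐞 (v * t)‖ ^ 2 = ∑ v ∈ s, ‖d v‖ ^ 2 := by
  have hexpand (t : ℝ) : ((‖∑ v ∈ s, d v * 𝐞 (v * t)‖ ^ 2 : ℝ) : ℂ)
      = ∑ v ∈ s, ∑ w ∈ s, d v * (starRingEnd ℂ) (d w) * 𝐞 ((v - w : ℤ) * t) := by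
    rw [Complex.ofReal_pow, ← Complex.mul_conj', map_sum, sum_mul_sum]
    refine sum_congr rfl fun v _ => sum_congr rfl fun w _ => ?_
    rw [Int.cast_sub, sub_mul, sub_eq_add_neg, AddChar.map_add_eq_mul, AddChar.map_neg_eq_inv,
      map_mul (starRingEnd ℂ), Circle.coe_mul, Circle.coe_inv_eq_conj]
    ring
  have hint (z : ℂ) (k : ℤ) :
      IntervalIntegrable (fun t : ℝ => z * 𝐞 (k * t)) volume c (c + 1) :=
    Continuous.intervalIntegrable (by fun_prop) _ _
  apply Complex.ofReal_injective
  rw [← intervalIntegral.integral_ofReal]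
  simp_rw [hexpand]
  rw [intervalIntegral.integral_finsetSum fun v _ =>
      Continuous.intervalIntegrable (by fun_prop) _ _, Complex.ofReal_sum]
  refine sum_congr rfl fun v hv => ?_
  rw [intervalIntegral.integral_finsetSum fun w _ => hint _ _]
  simp_rw [intervalIntegral.integral_const_mul, integral_fourierChar_mul, sub_eq_zero]
  rw [sum_congr rfl fun w _ => by rw [mul_ite, mul_one, mul_zero], sum_ite_eq, if_pos hv,
    Complex.mul_conj', Complex.ofReal_pow]

lemma integral_norm_sq_sum_mul_fourierChar_le {ι : Type*} (s : Finset ι) (z : ι → ℂ) (k : ι → ℤ)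
    {m : ℝ} (hm : ∀ v, (#{i ∈ s | k i = v} : ℝ) ≤ m) (c : ℝ) :
    ∫ t in c..c + 1, ‖∑ i ∈ s, z i * 𝐞 (k i * t)‖ ^ 2 ≤ m * ∑ i ∈ s, ‖z i‖ ^ 2 := by
  have hgroup (t : ℝ) : ∑ i ∈ s, z i * 𝐞 (k i * t)
      = ∑ v ∈ s.image k, (∑ i ∈ s with k i = v, z i) * 𝐞 (v * t) := by
    rw [← sum_fiberwise_of_maps_to fun i hi => mem_image_of_mem k hi]
    refine sum_congr rfl fun v _ => ?_
    rw [sum_mul]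
    exact sum_congr rfl fun i hi => by rw [(mem_filter.1 hi).2]
  simp_rw [hgroup]
  rw [integral_norm_sq_sum_mul_fourierChar (s.image k) (fun v => ∑ i ∈ s with k i = v, z i),
    ← sum_fiberwise_of_maps_to fun i hi => mem_image_of_mem k hi, mul_sum]
  refine sum_le_sum fun v _ => ?_
  calc ‖∑ i ∈ s with k i = v, z i‖ ^ 2 ≤ (∑ i ∈ s with k i = v, ‖z i‖) ^ 2 := by
        gcongr
        exact norm_sum_le _ _
    _ ≤ #{i ∈ s | k i = v} * ∑ i ∈ s with k i = v, ‖z i‖ ^ 2 := sq_sum_le_card_mul_sum_sq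
    _ ≤ m * ∑ i ∈ s with k i = v, ‖z i‖ ^ 2 := by gcongr; exact hm v

lemma integral_norm_sq_sum_fourierChar_le {ι : Type*} {s : Finset ι} {a : ι → ℤ}
    (ha : Set.InjOn a s) {h : ℕ} (hh : h ≠ 0) (c : ℝ) :
    ∫ t in c..c + 1, ‖∑ n ∈ s, (𝐞 (h * (a n * t)) : ℂ)‖ ^ 2 ≤ #s := by
  have hfiber (v : ℤ) : (#{n ∈ s | h * a n = v} : ℝ) ≤ 1 := by
    rw [Nat.cast_le_one, card_le_one]
    simp only [mem_filter]
    rintro i ⟨hi, rfl⟩ j ⟨hj, hij⟩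
    exact ha hi hj (mul_left_cancel₀ (Nat.cast_ne_zero.2 hh) hij.symm)
  simpa [mul_assoc] using
    integral_norm_sq_sum_mul_fourierChar_le s (fun _ => 1) (fun n => h * a n) hfiber c

lemma ae_summable_of_integral_le {ι : Type*} [Countable ι] {f : ι → ℝ → ℝ} {d : ι → ℝ}
    (hf : ∀ i, Continuous (f i)) (hf0 : ∀ i t, 0 ≤ f i t) (hd : Summable d)
    (hle : ∀ i (c : ℝ), ∫ t in c..c + 1, f i t ≤ d i) :
    ∀ᵐ t, Summable fun i => f i t := by
  rw [← Measure.restrict_univ (μ := volume), ← iUnion_Ioc_intCast, ae_restrict_iUnion_iff]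
  intro j
  set μ := volume.restrict (Set.Ioc (j : ℝ) (j + 1))
  have hlint (i : ι) : ∫⁻ t, ENNReal.ofReal (f i t) ∂μ ≤ ENNReal.ofReal (d i) := by
    rw [← ofReal_integral_eq_lintegral_ofReal
      ((hf i).integrableOn_Icc.mono_set Set.Ioc_subset_Icc_self) (ae_of_all _ (hf0 i)),
      ← intervalIntegral.integral_of_le (by linarith)]
    exact ENNReal.ofReal_le_ofReal (hle i j)
  have hmeas (i : ι) : Measurable fun t => ENNReal.ofReal (f i t) :=
    (hf i).measurable.ennreal_ofReal
  have hfin : ∫⁻ t, ∑' i, ENNReal.ofReal (f i t) ∂μ ≠ ⊤ := by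
    rw [lintegral_tsum fun i => (hmeas i).aemeasurable]
    exact ne_top_of_le_ne_top hd.tsum_ofReal_ne_top (ENNReal.tsum_le_tsum hlint)
  filter_upwards [ae_lt_top (Measurable.tsum hmeas) hfin] with t ht
  exact (ENNReal.summable_toReal ht.ne).congr fun i => ENNReal.toReal_ofReal (hf0 i t)

/-! ### Dyadic maximal inequality -/

/-- The sum of `‖∑ n ∈ I, z n‖ ^ 2` over all dyadic blocks `I = (j * 2 ^ i, (j + 1) * 2 ^ i]`
of length less than `2 ^ K` in `(0, 2 ^ K]`. By the Rademacher–Menshov inequality it controls all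
partial sums of `z` of length less than `2 ^ K`. -/
noncomputable def dyadicSq {E : Type*} [SeminormedAddCommGroup E] (K : ℕ) (z : ℕ → E) : ℝ :=
  ∑ i ∈ range K, ∑ j ∈ range (2 ^ (K - i)), ‖∑ n ∈ Ioc (j * 2 ^ i) ((j + 1) * 2 ^ i), z n‖ ^ 2

section DyadicSq

variable {E : Type*} [SeminormedAddCommGroup E]

lemma dyadicSq_nonneg (K : ℕ) (z : ℕ → E) : 0 ≤ dyadicSq K z := by
  unfold dyadicSq
  positivity

lemma dyadic_truncation_mono (N i : ℕ) : N / 2 ^ (i + 1) * 2 ^ (i + 1) ≤ N / 2 ^ i * 2 ^ i := by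
  rw [pow_succ, ← Nat.div_div_eq_div_mul, mul_comm (2 ^ i), ← mul_assoc]
  gcongr
  exact Nat.div_mul_le_self _ _

lemma sum_Ioc_dyadic_truncation {M : Type*} [AddCommMonoid M] (z : ℕ → M) (N K : ℕ) :
    ∑ n ∈ Ioc (N / 2 ^ K * 2 ^ K) N, z n
      = ∑ i ∈ range K, ∑ n ∈ Ioc (N / 2 ^ (i + 1) * 2 ^ (i + 1)) (N / 2 ^ i * 2 ^ i), z n := by
  induction K with
  | zero => simp
  | succ K ih =>
    rw [sum_range_succ_comm, ← ih, sum_Ioc_consecutive _ (dyadic_truncation_mono N K)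
      (Nat.div_mul_le_self _ _)]

lemma norm_sum_Ioc_dyadic_truncation_sq_le (z : ℕ → E) {K N i : ℕ} (hN : N < 2 ^ K) (hi : i < K) :
    ‖∑ n ∈ Ioc (N / 2 ^ (i + 1) * 2 ^ (i + 1)) (N / 2 ^ i * 2 ^ i), z n‖ ^ 2
      ≤ ∑ j ∈ range (2 ^ (K - i)), ‖∑ n ∈ Ioc (j * 2 ^ i) ((j + 1) * 2 ^ i), z n‖ ^ 2 := by
  have hq : N / 2 ^ i < 2 ^ (K - i) := by
    rwa [Nat.div_lt_iff_lt_mul (by positivity), ← pow_add, Nat.sub_add_cancel hi.le]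
  have hhalf : N / 2 ^ (i + 1) * 2 ^ (i + 1) = N / 2 ^ i / 2 * 2 * 2 ^ i := by
    rw [pow_succ, ← Nat.div_div_eq_div_mul]
    ring
  obtain ⟨r, hr | hr⟩ := Nat.even_or_odd' (N / 2 ^ i)
  · have hempty : N / 2 ^ (i + 1) * 2 ^ (i + 1) = N / 2 ^ i * 2 ^ i := by
      rw [hhalf, hr, Nat.mul_div_cancel_left r two_pos, mul_comm r]
    rw [hempty, Ioc_self, sum_empty, norm_zero, zero_pow two_ne_zero]
    positivity
  · have hblock : N / 2 ^ (i + 1) * 2 ^ (i + 1) = 2 * r * 2 ^ i := by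
      rw [hhalf, hr, show (2 * r + 1) / 2 * 2 = 2 * r by omega]
    rw [hblock, hr]
    exact single_le_sum (f := fun j => ‖∑ n ∈ Ioc (j * 2 ^ i) ((j + 1) * 2 ^ i), z n‖ ^ 2)
      (fun _ _ => by positivity) (mem_range.2 (hr ▸ hq |>.trans_le' (by omega)))

lemma norm_sum_Icc_one_sq_le_dyadicSq (z : ℕ → E) {K N : ℕ} (hN : N < 2 ^ K) :
    ‖∑ n ∈ Icc 1 N, z n‖ ^ 2 ≤ K * dyadicSq K z := by
  set I : ℕ → Finset ℕ := fun i => Ioc (N / 2 ^ (i + 1) * 2 ^ (i + 1)) (N / 2 ^ i * 2 ^ i)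
  have hsplit : ∑ n ∈ Icc 1 N, z n = ∑ i ∈ range K, ∑ n ∈ I i, z n := by
    rw [← sum_Ioc_dyadic_truncation, Nat.div_eq_of_lt hN, zero_mul,
      ← Icc_add_one_left_eq_Ioc, zero_add]
  calc ‖∑ n ∈ Icc 1 N, z n‖ ^ 2 ≤ (∑ i ∈ range K, ‖∑ n ∈ I i, z n‖) ^ 2 := by
        rw [hsplit]
        gcongr
        exact norm_sum_le _ _
    _ ≤ K * ∑ i ∈ range K, ‖∑ n ∈ I i, z n‖ ^ 2 := by
        simpa only [card_range] using sq_sum_le_card_mul_sum_sq (s := range K)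
          (f := fun i => ‖∑ n ∈ I i, z n‖)
    _ ≤ K * dyadicSq K z := by
        unfold dyadicSq
        gcongr with i hi
        exact norm_sum_Ioc_dyadic_truncation_sq_le z hN (mem_range.1 hi)

end DyadicSq

lemma continuous_dyadicSq {E : Type*} [SeminormedAddCommGroup E] {X : Type*} [TopologicalSpace X]
    {z : ℕ → X → E} (hz : ∀ n, Continuous (z n)) (K : ℕ) :
    Continuous fun t => dyadicSq K fun n => z n t := by
  unfold dyadicSq
  fun_prop

lemma integral_dyadicSq_fourierChar_le {a : ℕ → ℤ} (ha : Set.InjOn a (Set.Ici 1)) (K : ℕ) {h : ℕ}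
    (hh : h ≠ 0) (c : ℝ) :
    ∫ t in c..c + 1, dyadicSq K (fun n => (𝐞 (h * (a n * t)) : ℂ)) ≤ K * 2 ^ K := by
  set f : ℕ → ℕ → ℝ → ℝ := fun i j t =>
    ‖∑ n ∈ Ioc (j * 2 ^ i) ((j + 1) * 2 ^ i), (𝐞 (h * (a n * t)) : ℂ)‖ ^ 2
  have hblock (i j : ℕ) : ∫ t in c..c + 1, f i j t ≤ 2 ^ i := by
    refine (integral_norm_sq_sum_fourierChar_le (ha.mono fun n hn => ?_) hh c).trans_eq ?_
    · exact (Nat.zero_le _).trans_lt (mem_Ioc.1 hn).1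
    · rw [Nat.card_Ioc, ← Nat.sub_mul, Nat.add_sub_cancel_left, one_mul, Nat.cast_pow,
        Nat.cast_ofNat]
  have hint (i j : ℕ) : IntervalIntegrable (f i j) volume c (c + 1) :=
    Continuous.intervalIntegrable (by fun_prop) _ _
  calc ∫ t in c..c + 1, dyadicSq K (fun n => (𝐞 (h * (a n * t)) : ℂ))
      = ∑ i ∈ range K, ∑ j ∈ range (2 ^ (K - i)), ∫ t in c..c + 1, f i j t := by
        simp only [dyadicSq]
        rw [intervalIntegral.integral_finsetSum fun i _ =>
          Continuous.intervalIntegrable (by fun_prop) _ _]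
        exact sum_congr rfl fun i _ => intervalIntegral.integral_finsetSum fun j _ => hint i j
    _ ≤ ∑ i ∈ range K, ∑ _j ∈ range (2 ^ (K - i)), (2 : ℝ) ^ i :=
        sum_le_sum fun i _ => sum_le_sum fun j _ => hblock i j
    _ = ∑ _i ∈ range K, (2 : ℝ) ^ K := by
        refine sum_congr rfl fun i hi => ?_
        rw [sum_const, card_range, nsmul_eq_mul, Nat.cast_pow, Nat.cast_ofNat, ← pow_add,
          Nat.sub_add_cancel (mem_range.1 hi).le]
    _ = K * 2 ^ K := by rw [sum_const, card_range, nsmul_eq_mul]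

/-! ### Discrepancy and exponential sums -/

/-- The sum `∑ |∑ n ∈ s, 𝐞 (h * y n)| / h ^ (1 + η)` over all frequencies `h ≥ 1`, through which
exponential sums enter the bound for the discrepancy; the `h = 0` term of the series vanishes
because `0 ^ (-(1 + η)) = 0`. -/
noncomputable def weightedExpSum {ι : Type*} (η : ℝ) (s : Finset ι) (y : ι → ℝ) : ℝ :=
  ∑' h : ℕ, (h : ℝ) ^ (-(1 + η)) * ‖∑ n ∈ s, (𝐞 (h * y n) : ℂ)‖

section WeightedExpSum

variable {ι : Type*} (s : Finset ι) (y : ι → ℝ) {η δ : ℝ}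

lemma summable_weightedExpSum (hη : 0 < η) :
    Summable fun h : ℕ => (h : ℝ) ^ (-(1 + η)) * ‖∑ n ∈ s, (𝐞 (h * y n) : ℂ)‖ := by
  have hweights : Summable fun h : ℕ => (h : ℝ) ^ (-(1 + η)) :=
    Real.summable_nat_rpow.2 (by linarith)
  refine (hweights.mul_right (#s : ℝ)).of_nonneg_of_le (fun h => by positivity) fun h => ?_
  gcongr
  exact (norm_sum_le _ _).trans_eq <| by
    simp only [Circle.norm_coe, sum_const, nsmul_eq_mul, mul_one]

lemma weightedExpSum_sub_const (c : ℝ) :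
    weightedExpSum η s (fun n => y n - c) = weightedExpSum η s y := by
  refine tsum_congr fun h => ?_
  have hfactor : ∑ n ∈ s, (𝐞 (h * (y n - c)) : ℂ) = 𝐞 (-(h * c)) * ∑ n ∈ s, (𝐞 (h * y n) : ℂ) := by
    rw [mul_sum]
    refine sum_congr rfl fun n _ => ?_
    rw [← Circle.coe_mul, ← AddChar.map_add_eq_mul]
    ring_nf
  rw [hfactor, norm_mul, Circle.norm_coe, one_mul]

lemma norm_fourierChar_sub_one_le {t : ℝ} (ht : 0 ≤ t) (hη : 0 ≤ η) (hη1 : η ≤ 1) :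
    ‖(𝐞 t : ℂ) - 1‖ ≤ 2 * π * t ^ (1 - η) := by
  rcases le_total t 1 with h | h
  · have hlip : ‖(𝐞 t : ℂ) - 1‖ ≤ 2 * π * t := by
      have := norm_exp_I_mul_ofReal_sub_one_le (x := 2 * π * t)
      rwa [Real.norm_of_nonneg (by positivity), mul_comm I, ← Real.fourierChar_apply] at this
    refine hlip.trans ?_
    gcongr
    exact Real.self_le_rpow_of_le_one ht h (by linarith)
  · calc ‖(𝐞 t : ℂ) - 1‖ ≤ ‖(𝐞 t : ℂ)‖ + ‖(1 : ℂ)‖ := norm_sub_le _ _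
      _ = 2 * 1 := by rw [Circle.norm_coe, norm_one]; norm_num
      _ ≤ 2 * π * t ^ (1 - η) := by
          gcongr
          · linarith [Real.pi_gt_three]
          · exact Real.one_le_rpow h (by linarith)

lemma hasSum_fourierChar_re (x : ℝ) :
    HasSum (fun h : ℕ => 1 / (h : ℝ) ^ 2 * (𝐞 (h * x) : ℂ).re)
      (π ^ 2 * bernoulliFun 2 (Int.fract x)) := by
  convert! hasSum_one_div_nat_pow_mul_cos one_ne_zero
    (x := Int.fract x) ⟨Int.fract_nonneg x, (Int.fract_lt_one x).le⟩ using 1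
  · ext h
    rw [← fourierChar_natCast_mul_fract, fourierChar_re, mul_one, ← mul_assoc]
  · rw [bernoulliFun]
    norm_num [Nat.factorial]
    left
    ring

lemma abs_re_fourierChar_sub_one_mul_le (hδ : 0 ≤ δ) (hη : 0 ≤ η) (hη1 : η ≤ 1) (h : ℕ) (z : ℂ) :
    |1 / (h : ℝ) ^ 2 * ((𝐞 (h * δ) - 1) * z).re|
      ≤ 2 * π * δ ^ (1 - η) * ((h : ℝ) ^ (-(1 + η)) * ‖z‖) := by
  rcases Nat.eq_zero_or_pos h with rfl | hpos
  · simp only [Nat.cast_zero, ne_eq, OfNat.ofNat_ne_zero, not_false_eq_true, zero_pow, div_zero,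
      zero_mul, abs_zero]
    positivity
  have hh : (0 : ℝ) < h := Nat.cast_pos.2 hpos
  calc |1 / (h : ℝ) ^ 2 * ((𝐞 (h * δ) - 1) * z).re|
      ≤ 1 / (h : ℝ) ^ 2 * (‖(𝐞 (h * δ) : ℂ) - 1‖ * ‖z‖) := by
        rw [abs_mul, abs_of_nonneg (by positivity), ← norm_mul]
        gcongr
        exact Complex.abs_re_le_norm _
    _ ≤ 1 / (h : ℝ) ^ 2 * (2 * π * (h * δ) ^ (1 - η) * ‖z‖) := by
        gcongr
        exact norm_fourierChar_sub_one_le (by positivity) hη hη1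
    _ = 2 * π * δ ^ (1 - η) * ((h : ℝ) ^ (1 - η) / (h : ℝ) ^ 2 * ‖z‖) := by
        rw [Real.mul_rpow hh.le hδ]
        ring
    _ = 2 * π * δ ^ (1 - η) * ((h : ℝ) ^ (-(1 + η)) * ‖z‖) := by
        rw [← Real.rpow_natCast, ← Real.rpow_sub hh, Nat.cast_ofNat,
          show 1 - η - 2 = -(1 + η) by ring]

lemma abs_sum_bernoulliFun_fract_add_sub_le (hδ : 0 ≤ δ) (hη : 0 < η) (hη1 : η ≤ 1) :
    |∑ n ∈ s, (bernoulliFun 2 (Int.fract (y n + δ)) - bernoulliFun 2 (Int.fract (y n)))|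
      ≤ δ ^ (1 - η) * weightedExpSum η s y := by
  set D := ∑ n ∈ s, (bernoulliFun 2 (Int.fract (y n + δ)) - bernoulliFun 2 (Int.fract (y n)))
  have hseries : HasSum
      (fun h : ℕ => 1 / (h : ℝ) ^ 2 * ((𝐞 (h * δ) - 1) * ∑ n ∈ s, (𝐞 (h * y n) : ℂ)).re)
      (π ^ 2 * D) := by
    convert! hasSum_sum fun n (_ : n ∈ s) =>
      (hasSum_fourierChar_re (y n + δ)).sub (hasSum_fourierChar_re (y n)) using 1
    · ext h
      simp only [mul_sum, Complex.re_sum]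
      refine sum_congr rfl fun n _ => ?_
      rw [mul_add (h : ℝ), AddChar.map_add_eq_mul, ← mul_sub, ← Complex.sub_re, Circle.coe_mul]
      ring_nf
    · rw [mul_sum]
      exact sum_congr rfl fun n _ => by ring
  have hbound : |π ^ 2 * D| ≤ 2 * π * δ ^ (1 - η) * weightedExpSum η s y :=
    hseries.norm_le_of_bounded ((summable_weightedExpSum s y hη).hasSum.mul_left _)
      fun h => abs_re_fourierChar_sub_one_mul_le hδ hη.le hη1 h _
  have hW : 0 ≤ δ ^ (1 - η) * weightedExpSum η s y :=
    mul_nonneg (by positivity) (tsum_nonneg fun h => by positivity)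
  rw [abs_mul, abs_of_nonneg (by positivity : (0 : ℝ) ≤ π ^ 2)] at hbound
  refine le_of_mul_le_mul_left (hbound.trans ?_) (by positivity : (0 : ℝ) < π ^ 2)
  nlinarith [mul_nonneg (mul_nonneg Real.pi_pos.le (by linarith [Real.pi_gt_three] : 0 ≤ π - 2)) hW]

end WeightedExpSum

section Fract

variable {δ : ℝ}

lemma fract_sub_eq_add_ite (hδ : 0 ≤ δ) (hδ1 : δ ≤ 1) (y : ℝ) :
    Int.fract (y - δ) = Int.fract y - δ + if Int.fract y < δ then 1 else 0 := by
  have h0 := Int.fract_nonneg y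
  have h1 := Int.fract_lt_one y
  rw [Int.fract_eq_iff]
  split_ifs with h
  · exact ⟨by linarith, by linarith, ⌊y⌋ - 1, by rw [← Int.self_sub_floor]; push_cast; ring⟩
  · exact ⟨by linarith, by linarith, ⌊y⌋, by rw [← Int.self_sub_floor]; ring⟩

lemma bernoulliFun_fract_add_sub_le (hδ : 0 ≤ δ) (hδ1 : δ ≤ 1) (y : ℝ) :
    bernoulliFun 2 (Int.fract (y + δ)) - bernoulliFun 2 (Int.fract y)
      ≤ 2 * δ * (Int.fract y - 1 / 2) + δ ^ 2 := by
  have hy := fract_sub_eq_add_ite hδ hδ1 (y + δ)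
  rw [add_sub_cancel_right] at hy
  rw [hy, bernoulliFun_two, bernoulliFun_two]
  have h0 := Int.fract_nonneg (y + δ)
  split_ifs with h <;> nlinarith

lemma le_bernoulliFun_fract_sub_sub (hδ : 0 ≤ δ) (hδ1 : δ ≤ 1) (y : ℝ) :
    2 * δ * (Int.fract y - 1 / 2) - δ ^ 2
      ≤ bernoulliFun 2 (Int.fract y) - bernoulliFun 2 (Int.fract (y - δ)) := by
  rw [fract_sub_eq_add_ite hδ hδ1 y, bernoulliFun_two, bernoulliFun_two]
  split_ifs with h <;> nlinarith

end Fract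

lemma abs_sum_fract_sub_half_le {ι : Type*} (s : Finset ι) (y : ι → ℝ) {δ η : ℝ} (hδ : 0 < δ)
    (hδ1 : δ ≤ 1) (hη : 0 < η) (hη1 : η ≤ 1) :
    |∑ n ∈ s, (Int.fract (y n) - 1 / 2)| ≤ (δ ^ (-η) * weightedExpSum η s y + #s * δ) / 2 := by
  have hforward := abs_le.1 (abs_sum_bernoulliFun_fract_add_sub_le s y hδ.le hη hη1)
  have hbackward :=
    abs_le.1 (abs_sum_bernoulliFun_fract_add_sub_le s (fun n => y n - δ) hδ.le hη hη1)
  simp only [sub_add_cancel, weightedExpSum_sub_const] at hbackward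
  have hupper := sum_le_sum fun n (_ : n ∈ s) => le_bernoulliFun_fract_sub_sub hδ.le hδ1 (y n)
  have hlower := sum_le_sum fun n (_ : n ∈ s) => bernoulliFun_fract_add_sub_le hδ.le hδ1 (y n)
  rw [sum_sub_distrib, ← mul_sum, sum_const, nsmul_eq_mul] at hupper
  rw [sum_add_distrib, ← mul_sum, sum_const, nsmul_eq_mul] at hlower
  have hpow : δ ^ (1 - η) = δ * δ ^ (-η) := by
    rw [sub_eq_add_neg, Real.rpow_add hδ, Real.rpow_one]
  rw [hpow] at hforward hbackward
  rw [abs_le]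
  constructor <;> refine le_of_mul_le_mul_left (a := 2 * δ) ?_ (by positivity) <;> nlinarith

lemma natCast_mul_starDisc (N : ℕ) (x : ℕ → ℝ) :
    N * starDisc N x = ⨆ β : Set.Ioc (0 : ℝ) 1,
      |∑ n ∈ Icc 1 N, ((if 0 ≤ x n ∧ x n < β then 1 else 0) - (β : ℝ))| := by
  rw [starDisc, Real.mul_iSup_of_nonneg (Nat.cast_nonneg N)]
  congr 1 with β
  rw [sum_sub_distrib, sum_boole, sum_const, Nat.card_Icc, nsmul_eq_mul, Nat.add_sub_cancel]
  rcases eq_or_ne N 0 with rfl | hN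
  · simp
  · have hN : (N : ℝ) ≠ 0 := Nat.cast_ne_zero.2 hN
    rw [← Nat.abs_cast N, ← abs_mul, Nat.abs_cast, mul_sub, mul_div_cancel₀ _ hN]

lemma natCast_mul_starDisc_fract_le (N : ℕ) (y : ℕ → ℝ) {δ η : ℝ} (hδ : 0 < δ) (hδ1 : δ ≤ 1)
    (hη : 0 < η) (hη1 : η ≤ 1) :
    N * starDisc N (fun n => Int.fract (y n))
      ≤ δ ^ (-η) * weightedExpSum η (Icc 1 N) y + N * δ := by
  have : Nonempty (Set.Ioc (0 : ℝ) 1) := ⟨⟨1, by simp⟩⟩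
  rw [natCast_mul_starDisc]
  refine ciSup_le fun ⟨β, hβ0, hβ1⟩ => ?_
  have hsawtooth (n : ℕ) : (if 0 ≤ Int.fract (y n) ∧ Int.fract (y n) < β then 1 else 0) - β
      = (Int.fract (y n - β) - 1 / 2) - (Int.fract (y n) - 1 / 2) := by
    simp only [Int.fract_nonneg, true_and, fract_sub_eq_add_ite hβ0.le hβ1]
    ring
  simp only [hsawtooth]
  rw [sum_sub_distrib]
  have h := abs_sum_fract_sub_half_le (Icc 1 N) y hδ hδ1 hη hη1
  have hβ := abs_sum_fract_sub_half_le (Icc 1 N) (fun n => y n - β) hδ hδ1 hη hη1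
  rw [Nat.card_Icc, Nat.add_sub_cancel] at h hβ
  rw [weightedExpSum_sub_const] at hβ
  exact (abs_sub _ _).trans (by linarith)

lemma abs_sum_ite_sub_le_starDisc (N : ℕ) (x : ℕ → ℝ) {β : ℝ} (hβ : β ∈ Set.Ioc 0 1) :
    |∑ n ∈ Icc 1 N, ((if 0 ≤ x n ∧ x n < β then 1 else 0) - β)| ≤ N * starDisc N x := by
  rw [natCast_mul_starDisc]
  refine le_ciSup (f := fun β : Set.Ioc (0 : ℝ) 1 =>
    |∑ n ∈ Icc 1 N, ((if 0 ≤ x n ∧ x n < β then 1 else 0) - (β : ℝ))|) ⟨#(Icc 1 N) • 1, ?_⟩ ⟨β, hβ⟩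
  rintro _ ⟨⟨β, hβ0, hβ1⟩, rfl⟩
  refine (abs_sum_le_sum_abs _ _).trans (sum_le_card_nsmul _ _ _ fun n _ => ?_)
  rw [abs_le]
  split_ifs <;> constructor <;> linarith

section Koksma

variable {E : Type*} [NormedAddCommGroup E] {f f' : ℝ → E} {x : ℝ}

lemma intervalIntegrable_indicator_Ioi (hf' : IntervalIntegrable f' volume 0 1) :
    IntervalIntegrable ((Set.Ioi x).indicator f') volume 0 1 := by
  rw [intervalIntegrable_iff] at hf' ⊢
  exact hf'.indicator measurableSet_Ioi

variable [NormedSpace ℝ E]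

lemma ite_sub_smul_eq_indicator_sub (hx : 0 ≤ x) (f' : ℝ → E) :
    (fun β : ℝ => ((if 0 ≤ x ∧ x < β then 1 else 0) - β) • f' β)
      = fun β => (Set.Ioi x).indicator f' β - β • f' β := by
  ext β
  by_cases hβ : x < β <;> simp [hx, hβ, sub_smul]

lemma intervalIntegrable_id_smul (hf' : IntervalIntegrable f' volume 0 1) :
    IntervalIntegrable (fun β => β • f' β) volume 0 1 :=
  hf'.continuousOn_smul continuousOn_id

variable [CompleteSpace E]

lemma sub_integral_eq_neg_integral_ite_sub_smul (hx : x ∈ Set.Ico 0 1)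
    (hf : ∀ t ∈ Set.uIcc 0 1, HasDerivAt f (f' t) t) (hf' : IntervalIntegrable f' volume 0 1) :
    f x - ∫ t in (0 : ℝ)..1, f t
      = -∫ β in (0 : ℝ)..1, ((if 0 ≤ x ∧ x < β then 1 else 0) - β) • f' β := by
  have hx1 : Set.uIcc x 1 ⊆ Set.uIcc 0 1 :=
    Set.uIcc_subset_uIcc_right ⟨by simpa using hx.1, by simpa using hx.2.le⟩
  have hjump : ∫ β in (0 : ℝ)..1, (Set.Ioi x).indicator f' β = f 1 - f x := by
    rw [intervalIntegral.integral_of_le zero_le_one, setIntegral_indicator measurableSet_Ioi,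
      Set.Ioc_inter_Ioi, sup_of_le_right hx.1, ← intervalIntegral.integral_of_le hx.2.le]
    exact intervalIntegral.integral_eq_sub_of_hasDerivAt (fun t ht => hf t (hx1 ht))
      (hf'.mono_set hx1)
  have hparts : ∫ β in (0 : ℝ)..1, β • f' β = f 1 - ∫ t in (0 : ℝ)..1, f t := by
    simpa using intervalIntegral.integral_smul_deriv_eq_deriv_smul
      (fun t _ => hasDerivAt_id t) hf intervalIntegrable_const hf'
  rw [ite_sub_smul_eq_indicator_sub hx.1, intervalIntegral.integral_sub
    (intervalIntegrable_indicator_Ioi hf') (intervalIntegrable_id_smul hf'), hjump, hparts]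
  abel

lemma norm_sum_sub_integral_le_starDisc {N : ℕ} {x : ℕ → ℝ} (hx : ∀ n, x n ∈ Set.Ico 0 1)
    (hf : ∀ t ∈ Set.uIcc 0 1, HasDerivAt f (f' t) t) (hf' : IntervalIntegrable f' volume 0 1) :
    ‖∑ n ∈ Icc 1 N, (f (x n) - ∫ t in (0 : ℝ)..1, f t)‖
      ≤ N * starDisc N x * ∫ t in (0 : ℝ)..1, ‖f' t‖ := by
  have hrep : ∑ n ∈ Icc 1 N, (f (x n) - ∫ t in (0 : ℝ)..1, f t)
      = -∫ β in (0 : ℝ)..1,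
        (∑ n ∈ Icc 1 N, ((if 0 ≤ x n ∧ x n < β then 1 else 0) - β)) • f' β := by
    simp only [sub_integral_eq_neg_integral_ite_sub_smul (hx _) hf hf', sum_neg_distrib, sum_smul]
    rw [intervalIntegral.integral_finsetSum fun n _ => ?_]
    rw [ite_sub_smul_eq_indicator_sub (hx n).1]
    exact (intervalIntegrable_indicator_Ioi hf').sub (intervalIntegrable_id_smul hf')
  rw [hrep, norm_neg, ← intervalIntegral.integral_const_mul]
  refine intervalIntegral.norm_integral_le_of_norm_le zero_le_one (ae_of_all _ fun β hβ => ?_)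
    (hf'.norm.const_mul _)
  rw [norm_smul]
  gcongr
  exact abs_sum_ite_sub_le_starDisc N x hβ

end Koksma

lemma norm_sum_fourierChar_le_starDisc (N : ℕ) (y : ℕ → ℝ) {h : ℕ} (hh : h ≠ 0) :
    ‖∑ n ∈ Icc 1 N, (𝐞 (h * y n) : ℂ)‖
      ≤ 2 * π * h * (N * starDisc N (fun n => Int.fract (y n))) := by
  have hmean : ∫ t in (0 : ℝ)..1, (𝐞 (h * t) : ℂ) = 0 := by
    simpa [hh] using integral_fourierChar_mul h 0
  have hderiv : ∫ t in (0 : ℝ)..1, ‖(((h : ℝ) : ℂ) * (2 * π * I * 𝐞 (h * t)))‖ = 2 * π * h := by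
    simp only [norm_mul, Circle.norm_coe]
    simp [abs_of_pos Real.pi_pos, mul_comm]
  have hkoksma := norm_sum_sub_integral_le_starDisc (N := N)
    (fun n => ⟨Int.fract_nonneg (y n), Int.fract_lt_one (y n)⟩)
    (fun t _ => hasDerivAt_fourierChar_mul h t) (Continuous.intervalIntegrable (by fun_prop) _ _)
  simp only [fourierChar_natCast_mul_fract] at hkoksma
  rwa [hmean, hderiv, mul_comm, sum_congr rfl fun n _ => sub_zero _] at hkoksma

/-! ### Upper bound for almost every multiplier -/

section UpperBound

variable {a : ℕ → ℤ} {η t : ℝ}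

/-- The square function over dyadic blocks of the exponential sum `∑ 𝐞 (h * (a n * t))`, with the
pair `p = (K, h)` of a dyadic level and a frequency, weighted so that its sum over all pairs
converges for almost every `t`. -/
noncomputable def weightedDyadicSq (a : ℕ → ℤ) (η t : ℝ) (p : ℕ × ℕ) : ℝ :=
  (((2 : ℝ) ^ p.1) ^ (1 + η))⁻¹ *
    ((p.2 : ℝ) ^ (-(1 + η)) * (p.1 * dyadicSq p.1 fun n => (𝐞 (p.2 * (a n * t)) : ℂ)))

lemma weightedDyadicSq_nonneg (p : ℕ × ℕ) : 0 ≤ weightedDyadicSq a η t p := by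
  have := dyadicSq_nonneg p.1 fun n => (𝐞 (p.2 * (a n * t)) : ℂ)
  unfold weightedDyadicSq
  positivity

lemma continuous_weightedDyadicSq (p : ℕ × ℕ) :
    Continuous fun t => weightedDyadicSq a η t p := by
  have := continuous_dyadicSq (z := fun n t => (𝐞 (p.2 * (a n * t)) : ℂ)) (fun n => by fun_prop) p.1
  unfold weightedDyadicSq
  fun_prop

lemma integral_weightedDyadicSq_le (ha : Set.InjOn a (Set.Ici 1)) (hη : 0 < η) (p : ℕ × ℕ) (c : ℝ) :
    ∫ t in c..c + 1, weightedDyadicSq a η t p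
      ≤ ((p.1 : ℝ) ^ 2 * ((2 : ℝ) ^ (-η)) ^ p.1) * (p.2 : ℝ) ^ (-(1 + η)) := by
  obtain ⟨K, h⟩ := p
  simp only [weightedDyadicSq, intervalIntegral.integral_const_mul]
  rcases eq_or_ne h 0 with rfl | hh
  · rw [Nat.cast_zero, Real.zero_rpow (by linarith), zero_mul, mul_zero, mul_zero]
  have hpow : (((2 : ℝ) ^ K) ^ (1 + η))⁻¹ * 2 ^ K = ((2 : ℝ) ^ (-η)) ^ K := by
    rw [← Real.rpow_neg (by positivity), ← Real.rpow_add_one (by positivity),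
      ← Real.rpow_natCast_mul two_pos.le, ← Real.rpow_mul_natCast two_pos.le]
    ring_nf
  calc (((2 : ℝ) ^ K) ^ (1 + η))⁻¹ * ((h : ℝ) ^ (-(1 + η)) *
        (K * ∫ t in c..c + 1, dyadicSq K fun n => (𝐞 (h * (a n * t)) : ℂ)))
      ≤ (((2 : ℝ) ^ K) ^ (1 + η))⁻¹ * ((h : ℝ) ^ (-(1 + η)) * (K * (K * 2 ^ K))) := by
        gcongr
        exact integral_dyadicSq_fourierChar_le ha K hh c
    _ = (K : ℝ) ^ 2 * ((2 : ℝ) ^ (-η)) ^ K * (h : ℝ) ^ (-(1 + η)) := by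
        rw [← hpow]
        ring

lemma ae_summable_weightedDyadicSq (ha : Set.InjOn a (Set.Ici 1)) (hη : 0 < η) :
    ∀ᵐ t, Summable (weightedDyadicSq a η t) := by
  have hlevels : Summable fun K : ℕ => (K : ℝ) ^ 2 * ((2 : ℝ) ^ (-η)) ^ K :=
    summable_pow_mul_geometric_of_norm_lt_one 2 (by
      rw [Real.norm_of_nonneg (by positivity)]
      exact Real.rpow_lt_one_of_one_lt_of_neg one_lt_two (by linarith))
  have hfreqs : Summable fun h : ℕ => (h : ℝ) ^ (-(1 + η)) :=
    Real.summable_nat_rpow.2 (by linarith)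
  exact ae_summable_of_integral_le continuous_weightedDyadicSq
    (fun p _ => weightedDyadicSq_nonneg p)
    (hlevels.mul_of_nonneg hfreqs (fun K => by positivity) fun h => by positivity)
    (integral_weightedDyadicSq_le ha hη)

lemma weightedExpSum_le_of_summable (hη : 0 < η) (ht : Summable (weightedDyadicSq a η t)) {K N : ℕ}
    (hN : N < 2 ^ K) :
    weightedExpSum η (Icc 1 N) (fun n => a n * t) ≤ ((2 : ℝ) ^ K) ^ ((1 + η) / 2) *
      (∑' h : ℕ, (h : ℝ) ^ (-(1 + η)) + ∑' p, weightedDyadicSq a η t p) := by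
  set L : ℝ := ((2 : ℝ) ^ K) ^ ((1 + η) / 2)
  have hL : 0 < L := by positivity
  have hL2 : ((2 : ℝ) ^ K) ^ (1 + η) = L ^ 2 := by
    rw [← Real.rpow_mul_natCast (by positivity), Nat.cast_ofNat, div_mul_cancel₀ _ two_ne_zero]
  have hweights : Summable fun h : ℕ => (h : ℝ) ^ (-(1 + η)) :=
    Real.summable_nat_rpow.2 (by linarith)
  have hlevel : Summable fun h => weightedDyadicSq a η t (K, h) :=
    ht.comp_injective (Prod.mk_right_injective K)
  have hterm (h : ℕ) : (h : ℝ) ^ (-(1 + η)) * ‖∑ n ∈ Icc 1 N, (𝐞 (h * (a n * t)) : ℂ)‖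
      ≤ L * ((h : ℝ) ^ (-(1 + η)) + weightedDyadicSq a η t (K, h)) := by
    have hdyadic := norm_sum_Icc_one_sq_le_dyadicSq (fun n => (𝐞 (h * (a n * t)) : ℂ)) hN
    simp only [weightedDyadicSq, hL2]
    set S := ‖∑ n ∈ Icc 1 N, (𝐞 (h * (a n * t)) : ℂ)‖
    set Q := (K : ℝ) * dyadicSq K fun n => (𝐞 (h * (a n * t)) : ℂ)
    have hamgm : S ≤ L + Q / L := by
      rw [← sub_le_iff_le_add', le_div_iff₀ hL]
      nlinarith [sq_nonneg (S - L)]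
    calc (h : ℝ) ^ (-(1 + η)) * S ≤ (h : ℝ) ^ (-(1 + η)) * (L + Q / L) := by gcongr
      _ = L * ((h : ℝ) ^ (-(1 + η)) + (L ^ 2)⁻¹ * ((h : ℝ) ^ (-(1 + η)) * Q)) := by field_simp
  calc weightedExpSum η (Icc 1 N) (fun n => a n * t)
      ≤ ∑' h : ℕ, L * ((h : ℝ) ^ (-(1 + η)) + weightedDyadicSq a η t (K, h)) :=
        (summable_weightedExpSum _ _ hη).tsum_le_tsum hterm ((hweights.add hlevel).mul_left L)
    _ = L * (∑' h : ℕ, (h : ℝ) ^ (-(1 + η)) + ∑' h, weightedDyadicSq a η t (K, h)) := by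
        rw [tsum_mul_left, hweights.tsum_add hlevel]
    _ ≤ L * (∑' h : ℕ, (h : ℝ) ^ (-(1 + η)) + ∑' p, weightedDyadicSq a η t p) := by
        gcongr
        exact tsum_comp_le_tsum_of_inj ht weightedDyadicSq_nonneg (Prod.mk_right_injective K)

lemma exists_natCast_mul_starDisc_le_of_summable (hη : 0 < η) (hη1 : η ≤ 1)
    (ht : Summable (weightedDyadicSq a η t)) :
    ∃ C : ℝ, 0 ≤ C ∧ ∀ N : ℕ, N ≠ 0 →
      N * starDisc N (fun n => Int.fract (a n * t)) ≤ C * (N : ℝ) ^ (1 / 2 + 3 * η / 2) := by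
  set M : ℝ := ∑' h : ℕ, (h : ℝ) ^ (-(1 + η)) + ∑' p, weightedDyadicSq a η t p
  have hM : 0 ≤ M :=
    add_nonneg (tsum_nonneg fun h => by positivity) (tsum_nonneg weightedDyadicSq_nonneg)
  refine ⟨(M + 1) * 2 ^ (1 / 2 + 3 * η / 2), by positivity, fun N hN => ?_⟩
  have hNlt : N < 2 ^ (Nat.log 2 N + 1) := Nat.lt_pow_succ_log_self one_lt_two N
  obtain ⟨X, hX⟩ : ∃ X : ℝ, X = 2 ^ (Nat.log 2 N + 1) := ⟨_, rfl⟩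
  have hX1 : 1 ≤ X := hX ▸ one_le_pow₀ one_le_two
  have hX0 : 0 < X := one_pos.trans_le hX1
  have hNX : (N : ℝ) ≤ X := by
    rw [hX]
    exact_mod_cast hNlt.le
  have hXN : X ≤ 2 * N := by
    rw [hX, pow_succ']
    gcongr
    exact_mod_cast Nat.pow_log_le_self 2 hN
  calc N * starDisc N (fun n => Int.fract (a n * t))
      ≤ X⁻¹ ^ (-η) * weightedExpSum η (Icc 1 N) (fun n => a n * t) + N * X⁻¹ :=
        natCast_mul_starDisc_fract_le N _ (inv_pos.2 hX0) (inv_le_one_of_one_le₀ hX1) hη hη1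
    _ ≤ X ^ η * (X ^ ((1 + η) / 2) * M) + 1 := by
        rw [Real.inv_rpow hX0.le, Real.rpow_neg hX0.le, inv_inv, ← div_eq_mul_inv]
        gcongr
        · exact hX ▸ weightedExpSum_le_of_summable hη ht hNlt
        · exact div_le_one_of_le₀ hNX hX0.le
    _ = X ^ (1 / 2 + 3 * η / 2) * M + 1 := by
        rw [← mul_assoc, ← Real.rpow_add hX0]
        ring_nf
    _ ≤ (M + 1) * X ^ (1 / 2 + 3 * η / 2) := by
        linarith [Real.one_le_rpow hX1 (by positivity : 0 ≤ 1 / 2 + 3 * η / 2)]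
    _ ≤ (M + 1) * (2 * N) ^ (1 / 2 + 3 * η / 2) := by gcongr
    _ = (M + 1) * 2 ^ (1 / 2 + 3 * η / 2) * (N : ℝ) ^ (1 / 2 + 3 * η / 2) := by
        rw [Real.mul_rpow two_pos.le (Nat.cast_nonneg N), mul_assoc]

lemma ae_natCast_mul_starDisc_le (ha : Set.InjOn a (Set.Ici 1)) :
    ∀ᵐ t : ℝ, ∀ ε > 0, ∃ C : ℝ, ∀ N : ℕ,
      N * starDisc N (fun n => Int.fract (a n * t)) ≤ C * (N : ℝ) ^ ((1 : ℝ) / 2 + ε) := by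
  have hall : ∀ᵐ t : ℝ, ∀ m : ℕ, Summable (weightedDyadicSq a (1 / (m + 1)) t) :=
    ae_all_iff.2 fun m => ae_summable_weightedDyadicSq ha (by positivity)
  filter_upwards [hall] with t ht ε hε
  obtain ⟨m, hm⟩ := exists_nat_one_div_lt (show 0 < 2 * ε / 3 by positivity)
  have hm1 : 1 / ((m : ℝ) + 1) ≤ 1 := by
    rw [div_le_one (by positivity)]
    linarith [(Nat.cast_nonneg m : (0 : ℝ) ≤ m)]
  obtain ⟨C, hC0, hC⟩ := exists_natCast_mul_starDisc_le_of_summable (by positivity) hm1 (ht m)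
  refine ⟨C, fun N => ?_⟩
  rcases Nat.eq_zero_or_pos N with rfl | hN
  · rw [Nat.cast_zero, zero_mul]
    positivity
  · refine (hC N hN.ne').trans ?_
    gcongr
    · exact Nat.one_le_cast.2 hN
    · linarith

end UpperBound

/-! ### Additive energy and off-diagonal sums -/

lemma addEnergy_eq_sum_sq (A : Finset ℤ) :
    addEnergy A = ∑ v ∈ A - A, A.addConvolution (-A) v ^ 2 := by
  rw [addEnergy, card_eq_sum_card_fiberwise (f := fun q => q.1 - q.2.1) (t := A - A)]
  · refine sum_congr rfl fun v _ => ?_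
    rw [sq, ← card_sub_eq, ← card_product]
    refine card_nbij' (fun q => ((q.1, q.2.1), (q.2.2.1, q.2.2.2)))
      (fun r => (r.1.1, r.1.2, r.2.1, r.2.2)) ?_ ?_ (fun _ _ => rfl) fun _ _ => rfl
    · rintro ⟨x, y, z, w⟩
      simp only [coe_filter, mem_product, mem_filter, coe_product, Set.mem_prod,
        Set.mem_ofPred_eq]
      grind
    · rintro ⟨⟨x, y⟩, z, w⟩
      simp only [coe_filter, mem_product, mem_filter, coe_product, Set.mem_prod,
        Set.mem_ofPred_eq]
      grind
  · rintro ⟨x, y, z, w⟩ hq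
    simp only [coe_filter, mem_product, Set.mem_ofPred_eq] at hq
    exact sub_mem_sub hq.1.1 hq.1.2.1

lemma addConvolution_neg_zero (A : Finset ℤ) : A.addConvolution (-A) 0 = #A := by
  simpa using (card_inter_vadd A A 0).symm

lemma norm_sq_sum_fourierChar_eq (A : Finset ℤ) (y : ℝ) :
    ((‖∑ x ∈ A, (𝐞 (x * y) : ℂ)‖ ^ 2 : ℝ) : ℂ)
      = #A + ∑ v ∈ (A - A).erase 0, A.addConvolution (-A) v * (𝐞 (v * y) : ℂ) := by
  have hpairs : ((‖∑ x ∈ A, (𝐞 (x * y) : ℂ)‖ ^ 2 : ℝ) : ℂ)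
      = ∑ p ∈ A ×ˢ A, (𝐞 ((p.1 - p.2 : ℤ) * y) : ℂ) := by
    rw [Complex.ofReal_pow, ← Complex.mul_conj', map_sum, sum_mul_sum, sum_product]
    refine sum_congr rfl fun x _ => sum_congr rfl fun z _ => ?_
    rw [Int.cast_sub, sub_mul, sub_eq_add_neg, AddChar.map_add_eq_mul, AddChar.map_neg_eq_inv,
      Circle.coe_mul, Circle.coe_inv_eq_conj]
  have hgroup : ∑ p ∈ A ×ˢ A, (𝐞 ((p.1 - p.2 : ℤ) * y) : ℂ)
      = ∑ v ∈ A - A, A.addConvolution (-A) v * (𝐞 (v * y) : ℂ) := by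
    rw [← sum_fiberwise_of_maps_to (g := fun p : ℤ × ℤ => p.1 - p.2) (t := A - A) fun p hp =>
      sub_mem_sub (mem_product.1 hp).1 (mem_product.1 hp).2]
    refine sum_congr rfl fun v _ => ?_
    rw [sum_congr rfl fun p hp => by rw [(mem_filter.1 hp).2], sum_const, nsmul_eq_mul,
      card_sub_eq]
  have hdiag : A.addConvolution (-A) 0 * (𝐞 ((0 : ℤ) * y) : ℂ) = #A := by
    rw [addConvolution_neg_zero, Int.cast_zero, zero_mul, AddChar.map_zero_eq_one,
      Circle.coe_one, mul_one]
  rcases A.eq_empty_or_nonempty with rfl | ⟨x, hx⟩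
  · simp
  · have hmem : (0 : ℤ) ∈ A - A := sub_self x ▸ sub_mem_sub hx hx
    rw [hpairs, hgroup, ← hdiag]
    exact (add_sum_erase _ _ hmem).symm

lemma card_filter_mul_eq_le {P : Finset ℕ} (hP : ∀ p ∈ P, p.Prime) {V : Finset ℤ} {W : ℝ}
    (hW0 : 0 ≤ W) (hW : ∀ v ∈ V, (#{q ∈ P | q ∣ v.natAbs} : ℝ) ≤ W) (u : ℤ) :
    (#{i ∈ P ×ˢ V | (i.1 : ℤ) * i.2 = u} : ℝ) ≤ 1 + W := by
  set F : Finset (ℕ × ℤ) := {i ∈ P ×ˢ V | (i.1 : ℤ) * i.2 = u}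
  rcases F.eq_empty_or_nonempty with hempty | ⟨⟨p, v⟩, hpv⟩
  · rw [hempty, card_empty, Nat.cast_zero]
    positivity
  obtain ⟨hpvPV, hu⟩ := mem_filter.1 hpv
  obtain ⟨hp, hv⟩ := mem_product.1 hpvPV
  have hmaps : ∀ i ∈ F, i.1 ∈ insert p {q ∈ P | q ∣ v.natAbs} := by
    rintro ⟨q, w⟩ hi
    obtain ⟨hqw, hqu⟩ := mem_filter.1 hi
    have hq := (mem_product.1 hqw).1
    refine mem_insert.2 (or_iff_not_imp_left.2 fun hqp => mem_filter.2 ⟨hq, ?_⟩)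
    have hcop : IsCoprime (q : ℤ) p :=
      Nat.isCoprime_iff_coprime.2 ((Nat.coprime_primes (hP q hq) (hP p hp)).2 hqp)
    exact Int.natCast_dvd.1 (hcop.dvd_of_dvd_mul_left ⟨w, hu.trans hqu.symm⟩)
  have hinj : Set.InjOn Prod.fst (F : Set (ℕ × ℤ)) := by
    rintro ⟨q, w⟩ hi ⟨q', w'⟩ hi' (rfl : q = q')
    obtain ⟨hqw, hqu⟩ := mem_filter.1 hi
    have hq0 : (q : ℤ) ≠ 0 := Nat.cast_ne_zero.2 (hP q (mem_product.1 hqw).1).ne_zero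
    exact Prod.ext rfl (mul_left_cancel₀ hq0 (hqu.trans (mem_filter.1 hi').2.symm))
  calc (#F : ℝ) ≤ 1 + #{q ∈ P | q ∣ v.natAbs} := by
        rw [add_comm]
        exact_mod_cast (card_le_card_of_injOn _ hmaps hinj).trans (card_insert_le _ _)
    _ ≤ 1 + W := by gcongr; exact hW v hv

/-- The off-diagonal part of `∑ p ∈ P, ‖∑ x ∈ A, 𝐞 (p * (x * t))‖ ^ 2`, grouped by the difference
`v` of the two summation variables, which occurs `A.addConvolution (-A) v` times. -/
noncomputable def offDiagSum (A : Finset ℤ) (P : Finset ℕ) (t : ℝ) : ℂ :=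
  ∑ i ∈ P ×ˢ (A - A).erase 0, A.addConvolution (-A) i.2 * 𝐞 ((i.1 * i.2 : ℤ) * t)

section OffDiagSum

variable {A : Finset ℤ} {P : Finset ℕ} {W t : ℝ}

lemma continuous_offDiagSum : Continuous (offDiagSum A P) := by
  unfold offDiagSum
  fun_prop

variable (A P t) in
lemma sum_norm_sq_eq_add_offDiagSum :
    ((∑ p ∈ P, ‖∑ x ∈ A, (𝐞 (p * (x * t)) : ℂ)‖ ^ 2 : ℝ) : ℂ) = #P * #A + offDiagSum A P t := by
  have hp (p : ℕ) : ((‖∑ x ∈ A, (𝐞 (p * (x * t)) : ℂ)‖ ^ 2 : ℝ) : ℂ) = #A +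
      ∑ v ∈ (A - A).erase 0, A.addConvolution (-A) v * (𝐞 ((p * v : ℤ) * t) : ℂ) := by
    rw [sum_congr rfl fun x _ => by rw [mul_left_comm], norm_sq_sum_fourierChar_eq]
    refine congrArg _ (sum_congr rfl fun v _ => ?_)
    rw [Int.cast_mul, Int.cast_natCast, mul_assoc, mul_left_comm]
  rw [offDiagSum, Complex.ofReal_sum, sum_congr rfl fun p _ => hp p, sum_add_distrib, sum_const,
    nsmul_eq_mul, sum_product]

lemma exists_le_norm_sq_of_norm_offDiagSum_le (hP : P.Nonempty)
    (h : ‖offDiagSum A P t‖ ≤ #P * #A / 2) :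
    ∃ p ∈ P, (#A : ℝ) / 2 ≤ ‖∑ x ∈ A, (𝐞 (p * (x * t)) : ℂ)‖ ^ 2 := by
  refine exists_le_of_sum_le hP ?_
  have hre := congrArg Complex.re (sum_norm_sq_eq_add_offDiagSum A P t)
  rw [Complex.ofReal_re, Complex.add_re, ← Nat.cast_mul, Complex.natCast_re, Nat.cast_mul] at hre
  rw [hre, sum_const, nsmul_eq_mul]
  linarith [neg_le_of_abs_le ((Complex.abs_re_le_norm _).trans h)]

lemma integral_norm_sq_offDiagSum_le (hP : ∀ p ∈ P, p.Prime) (hW0 : 0 ≤ W)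
    (hW : ∀ v ∈ (A - A).erase 0, (#{q ∈ P | q ∣ v.natAbs} : ℝ) ≤ W) (c : ℝ) :
    ∫ t in c..c + 1, ‖offDiagSum A P t‖ ^ 2 ≤ (1 + W) * (#P * addEnergy A) := by
  refine (integral_norm_sq_sum_mul_fourierChar_le _ _ _ (card_filter_mul_eq_le hP hW0 hW) c).trans
    ?_
  gcongr
  rw [sum_product, addEnergy_eq_sum_sq, Nat.cast_sum]
  simp only [Complex.norm_natCast, Nat.cast_pow, sum_const, nsmul_eq_mul]
  gcongr
  exact erase_subset _ _

end OffDiagSum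

lemma ae_eventually_exists_le_norm_sq {A : ℕ → Finset ℤ} {P : ℕ → Finset ℕ} {W : ℕ → ℝ}
    (hA : ∀ᶠ k in atTop, (A k).Nonempty) (hP : ∀ᶠ k in atTop, (P k).Nonempty)
    (hprime : ∀ k, ∀ p ∈ P k, p.Prime) (hW0 : ∀ k, 0 ≤ W k)
    (hW : ∀ k, ∀ v ∈ (A k - A k).erase 0, (#{q ∈ P k | q ∣ v.natAbs} : ℝ) ≤ W k)
    (hsum : Summable fun k => (1 + W k) * addEnergy (A k) / (#(P k) * #(A k) ^ 2)) :
    ∀ᵐ t : ℝ, ∀ᶠ k in atTop,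
      ∃ p ∈ P k, (#(A k) : ℝ) / 2 ≤ ‖∑ x ∈ A k, (𝐞 (p * (x * t)) : ℂ)‖ ^ 2 := by
  set f : ℕ → ℝ → ℝ := fun k t => ((#(P k) * #(A k) : ℝ) ^ 2)⁻¹ * ‖offDiagSum (A k) (P k) t‖ ^ 2
  have hf (k : ℕ) : Continuous (f k) := by
    have := continuous_offDiagSum (A := A k) (P := P k)
    fun_prop
  have hmoment (k : ℕ) (c : ℝ) :
      ∫ t in c..c + 1, f k t ≤ (1 + W k) * addEnergy (A k) / (#(P k) * #(A k) ^ 2) := by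
    rw [intervalIntegral.integral_const_mul]
    refine (mul_le_mul_of_nonneg_left (integral_norm_sq_offDiagSum_le (hprime k) (hW0 k) (hW k) c)
      (by positivity)).trans_eq ?_
    rcases eq_or_ne (#(P k) : ℝ) 0 with h0 | h0
    · simp [h0]
    · field_simp
  filter_upwards [ae_summable_of_integral_le hf (fun k t => by positivity) hsum hmoment] with t ht
  filter_upwards [hA, hP, ht.tendsto_atTop_zero.eventually_lt_const (show (0 : ℝ) < 1 / 4 by
    norm_num)] with k hAk hPk hk
  have hA0 : (0 : ℝ) < #(A k) := Nat.cast_pos.2 hAk.card_pos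
  have hP0 : (0 : ℝ) < #(P k) := Nat.cast_pos.2 hPk.card_pos
  refine exists_le_norm_sq_of_norm_offDiagSum_le hPk (le_of_sq_le_sq ?_ (by positivity))
  rw [inv_mul_lt_iff₀ (by positivity)] at hk
  linarith

/-! ### Lower bound for almost every multiplier -/

lemma card_primeFactors_mul_log_two_le (n : ℕ) : #n.primeFactors * Real.log 2 ≤ Real.log n := by
  rcases eq_or_ne n 0 with rfl | hn
  · simp
  have hpow : 2 ^ #n.primeFactors ≤ n :=
    (pow_card_le_prod _ _ _ fun p hp => (Nat.prime_of_mem_primeFactors hp).two_le).trans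
      (Nat.le_of_dvd (Nat.pos_of_ne_zero hn) (Nat.prod_primeFactors_dvd n))
  rw [← Real.log_pow]
  exact Real.log_le_log (by positivity) (by exact_mod_cast hpow)

lemma card_filter_dvd_natAbs_sub_le {A : Finset ℤ} {P : Finset ℕ} (hP : ∀ p ∈ P, p.Prime) {B : ℝ}
    (hA : ∀ x ∈ A, Real.log |(x : ℝ)| ≤ B) {v : ℤ} (hv : v ∈ (A - A).erase 0) :
    (#{q ∈ P | q ∣ v.natAbs} : ℝ) ≤ 1 + B / Real.log 2 := by
  obtain ⟨hv0, hvA⟩ := mem_erase.1 hv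
  obtain ⟨x, hx, y, hy, rfl⟩ := mem_sub.1 hvA
  have hle (z : ℤ) (hz : z ∈ A) : |(z : ℝ)| ≤ Real.exp B :=
    (Real.le_exp_log _).trans (Real.exp_le_exp.2 (hA z hz))
  have hsub : ((x - y).natAbs : ℝ) ≤ 2 * Real.exp B := by
    rw [Nat.cast_natAbs, Int.cast_abs, Int.cast_sub, two_mul]
    exact (abs_sub _ _).trans (add_le_add (hle x hx) (hle y hy))
  have hfactors : {q ∈ P | q ∣ (x - y).natAbs} ⊆ (x - y).natAbs.primeFactors := fun q hq =>
    Nat.mem_primeFactors.2 ⟨hP q (mem_filter.1 hq).1, (mem_filter.1 hq).2, Int.natAbs_ne_zero.2 hv0⟩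
  have hlog2 : 0 < Real.log 2 := Real.log_pos one_lt_two
  rw [one_add_div hlog2.ne', le_div_iff₀ hlog2]
  calc (#{q ∈ P | q ∣ (x - y).natAbs} : ℝ) * Real.log 2
      ≤ #(x - y).natAbs.primeFactors * Real.log 2 := by gcongr
    _ ≤ Real.log (x - y).natAbs := card_primeFactors_mul_log_two_le _
    _ ≤ Real.log (2 * Real.exp B) := Real.log_le_log (by positivity) hsub
    _ = Real.log 2 + B := by rw [Real.log_mul two_ne_zero (Real.exp_ne_zero B), Real.log_exp]

lemma natCast_le_primeCounting_mul_log {n : ℕ} (hn : 2 ≤ n) :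
    (n : ℝ) ≤ 8 * (Nat.primeCounting n * Real.log n) := by
  have hpsi := (Chebyshev.psi_ge n).trans (Chebyshev.psi_le_primeCounting_mul_log n)
  have hn' : (2 : ℝ) ≤ n := Nat.ofNat_le_cast.2 hn
  have htangent : Real.log (n + 1) ≤ (n + 1) / 4 - 1 + 2 * Real.log 2 := by
    have h := Real.log_le_sub_one_of_pos (show 0 < ((n : ℝ) + 1) / 4 by positivity)
    rw [Real.log_div (by positivity) four_ne_zero, show (4 : ℝ) = 2 ^ 2 by norm_num,
      Real.log_pow] at h
    push_cast at h
    linarith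
  nlinarith [Real.log_two_gt_d9]

lemma sq_le_card_primesLE_sq_mul {k : ℕ} (hk : 2 ≤ k) :
    (k : ℝ) ^ 2 ≤ 64 * (k : ℝ) ^ (1 / 4 : ℝ) * #(Nat.primesLE (k ^ 2)) := by
  have hcheb := natCast_le_primeCounting_mul_log (hk.trans (Nat.le_self_pow two_ne_zero k))
  have hlog := Real.log_natCast_le_rpow_div k (show (0 : ℝ) < 1 / 4 by norm_num)
  rw [Nat.cast_pow, Real.log_pow, Nat.cast_ofNat] at hcheb
  rw [Nat.primesLE_card_eq_primeCounting]
  calc (k : ℝ) ^ 2 ≤ 8 * (Nat.primeCounting (k ^ 2) * (2 * Real.log k)) := hcheb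
    _ ≤ 8 * (Nat.primeCounting (k ^ 2) * (2 * ((k : ℝ) ^ (1 / 4 : ℝ) / (1 / 4)))) := by gcongr
    _ = 64 * (k : ℝ) ^ (1 / 4 : ℝ) * Nat.primeCounting (k ^ 2) := by ring

lemma natCast_pow_rpow_div (k : ℕ) {m : ℕ} (hm : m ≠ 0) (δ : ℝ) :
    ((k ^ m : ℕ) : ℝ) ^ (δ / m) = (k : ℝ) ^ δ := by
  rw [Nat.cast_pow, ← Real.rpow_natCast_mul k.cast_nonneg,
    mul_div_cancel₀ _ (Nat.cast_ne_zero.2 hm)]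

section LowerBound

variable {a : ℕ → ℤ}

lemma exists_log_abs_image_Icc_pow_le
    (hgrowth : ∀ ε > (0 : ℝ), ∃ C : ℝ, ∀ n : ℕ, 1 ≤ n → Real.log |(a n : ℝ)| ≤ C * (n : ℝ) ^ ε)
    {m : ℕ} (hm : m ≠ 0) :
    ∃ C : ℝ, 0 ≤ C ∧ ∀ k : ℕ, ∀ x ∈ (Icc 1 (k ^ m)).image a,
      Real.log |(x : ℝ)| ≤ C * (k : ℝ) ^ (1 / 4 : ℝ) := by
  obtain ⟨C, hC⟩ := hgrowth (1 / 4 / m) (by positivity)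
  refine ⟨|C|, abs_nonneg C, fun k => forall_mem_image.2 fun n hn => ?_⟩
  obtain ⟨hn1, hnk⟩ := mem_Icc.1 hn
  calc Real.log |(a n : ℝ)| ≤ C * (n : ℝ) ^ (1 / 4 / m : ℝ) := hC n hn1
    _ ≤ |C| * ((k ^ m : ℕ) : ℝ) ^ (1 / 4 / m : ℝ) := by
        gcongr
        exact le_abs_self C
    _ = |C| * (k : ℝ) ^ (1 / 4 : ℝ) := by rw [natCast_pow_rpow_div k hm]

lemma exists_addEnergy_image_Icc_pow_le
    (henergy : ∀ ε > (0 : ℝ), ∃ C : ℝ, ∀ N : ℕ, 1 ≤ N →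
      (addEnergy ((Icc 1 N).image a) : ℝ) ≤ C * (N : ℝ) ^ ((2 : ℝ) + ε))
    {m : ℕ} (hm : m ≠ 0) :
    ∃ C : ℝ, 0 ≤ C ∧ ∀ k : ℕ, 1 ≤ k → (addEnergy ((Icc 1 (k ^ m)).image a) : ℝ)
      ≤ C * (((k ^ m : ℕ) : ℝ) ^ 2 * (k : ℝ) ^ (1 / 4 : ℝ)) := by
  obtain ⟨C, hC⟩ := henergy (1 / 4 / m) (by positivity)
  refine ⟨|C|, abs_nonneg C, fun k hk => (hC _ (Nat.one_le_pow m k hk)).trans ?_⟩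
  rw [Real.rpow_add (by positivity), Real.rpow_two, natCast_pow_rpow_div k hm]
  gcongr
  exact le_abs_self C

lemma card_image_Icc_one (ha : Set.InjOn a (Set.Ici 1)) (N : ℕ) : #((Icc 1 N).image a) = N := by
  rw [card_image_of_injOn (ha.mono fun n hn => (mem_Icc.1 hn).1), Nat.card_Icc,
    Nat.add_sub_cancel]

-- The three factors `k ^ (1 / 4)`, lost to the size of `a`, to the energy and to the density of the
-- primes, leave the term well below `k⁻¹`, thanks to the `k ^ 2` available in the prime count.
lemma addEnergy_image_Icc_pow_div_le {B E : ℝ} {m k : ℕ} (ha : Set.InjOn a (Set.Ici 1))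
    (hB : 0 ≤ B) (hE : 0 ≤ E) (hk : 2 ≤ k)
    (henergy : (addEnergy ((Icc 1 (k ^ m)).image a) : ℝ)
      ≤ E * (((k ^ m : ℕ) : ℝ) ^ 2 * (k : ℝ) ^ (1 / 4 : ℝ))) :
    (1 + (1 + B * (k : ℝ) ^ (1 / 4 : ℝ))) * addEnergy ((Icc 1 (k ^ m)).image a) /
        (#(Nat.primesLE (k ^ 2)) * #((Icc 1 (k ^ m)).image a) ^ 2)
      ≤ 64 * (2 + B) * E * (k : ℝ) ^ (-(5 / 4) : ℝ) := by
  have hk0 : (0 : ℝ) < k := Nat.cast_pos.2 (by lia)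
  have hprimes := sq_le_card_primesLE_sq_mul hk
  have hcard : (0 : ℝ) < #(Nat.primesLE (k ^ 2)) :=
    pos_of_mul_pos_right ((pow_pos hk0 2).trans_le hprimes) (by positivity)
  have hroot : (k : ℝ) ^ (-(5 / 4) : ℝ) * (k : ℝ) ^ 2 = ((k : ℝ) ^ (1 / 4 : ℝ)) ^ 3 := by
    rw [← Real.rpow_natCast, ← Real.rpow_natCast, ← Real.rpow_mul hk0.le, ← Real.rpow_add hk0]
    norm_num
  have hN : (0 : ℝ) < (k ^ m : ℕ) := Nat.cast_pos.2 (by positivity)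
  rw [card_image_Icc_one ha, div_le_iff₀ (by positivity)]
  set r := (k : ℝ) ^ (1 / 4 : ℝ)
  set N : ℝ := ((k ^ m : ℕ) : ℝ)
  have hr : 1 ≤ r := Real.one_le_rpow (Nat.one_le_cast.2 (by lia)) (by norm_num)
  calc (1 + (1 + B * r)) * (addEnergy ((Icc 1 (k ^ m)).image a) : ℝ)
      ≤ ((2 + B) * r) * (E * (N ^ 2 * r)) := by
        gcongr
        linarith
    _ ≤ 64 * (2 + B) * E * (k : ℝ) ^ (-(5 / 4) : ℝ) * (#(Nat.primesLE (k ^ 2)) * N ^ 2) := by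
        have hr2 : r ^ 2 ≤ 64 * (k : ℝ) ^ (-(5 / 4) : ℝ) * #(Nat.primesLE (k ^ 2)) := by
          refine le_of_mul_le_mul_left ?_ (zero_lt_one.trans_le hr)
          calc r * r ^ 2 = (k : ℝ) ^ (-(5 / 4) : ℝ) * (k : ℝ) ^ 2 := by rw [hroot]; ring
            _ ≤ (k : ℝ) ^ (-(5 / 4) : ℝ) * (64 * r * #(Nat.primesLE (k ^ 2))) := by gcongr
            _ = r * (64 * (k : ℝ) ^ (-(5 / 4) : ℝ) * #(Nat.primesLE (k ^ 2))) := by ring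
        linear_combination (2 + B) * E * N ^ 2 * hr2

lemma summable_addEnergy_image_Icc_pow_div {B E : ℝ} {m : ℕ} (ha : Set.InjOn a (Set.Ici 1))
    (hB : 0 ≤ B) (hE : 0 ≤ E)
    (henergy : ∀ k : ℕ, 1 ≤ k → (addEnergy ((Icc 1 (k ^ m)).image a) : ℝ)
      ≤ E * (((k ^ m : ℕ) : ℝ) ^ 2 * (k : ℝ) ^ (1 / 4 : ℝ))) :
    Summable fun k : ℕ => (1 + (1 + B * (k : ℝ) ^ (1 / 4 : ℝ))) *
      addEnergy ((Icc 1 (k ^ m)).image a) /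
        (#(Nat.primesLE (k ^ 2)) * #((Icc 1 (k ^ m)).image a) ^ 2) := by
  have hsum : Summable fun k : ℕ => 64 * (2 + B) * E * (k : ℝ) ^ (-(5 / 4) : ℝ) :=
    (Real.summable_nat_rpow.2 (by norm_num)).mul_left _
  refine hsum.of_norm_bounded_eventually_nat ?_
  filter_upwards [eventually_ge_atTop 2] with k hk
  rw [Real.norm_of_nonneg (by positivity)]
  exact addEnergy_image_Icc_pow_div_le ha hB hE hk (henergy k (by lia))

lemma ae_eventually_exists_prime_le_norm_sq (ha : Set.InjOn a (Set.Ici 1))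
    (hgrowth : ∀ ε > (0 : ℝ), ∃ C : ℝ, ∀ n : ℕ, 1 ≤ n → Real.log |(a n : ℝ)| ≤ C * (n : ℝ) ^ ε)
    (henergy : ∀ ε > (0 : ℝ), ∃ C : ℝ, ∀ N : ℕ, 1 ≤ N →
      (addEnergy ((Icc 1 N).image a) : ℝ) ≤ C * (N : ℝ) ^ ((2 : ℝ) + ε))
    {m : ℕ} (hm : m ≠ 0) :
    ∀ᵐ t : ℝ, ∀ᶠ k : ℕ in atTop, ∃ p : ℕ, p.Prime ∧ p ≤ k ^ 2 ∧
      ((k ^ m : ℕ) : ℝ) / 2 ≤ ‖∑ n ∈ Icc 1 (k ^ m), (𝐞 (p * (a n * t)) : ℂ)‖ ^ 2 := by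
  obtain ⟨B, hB, hlog⟩ := exists_log_abs_image_Icc_pow_le hgrowth hm
  obtain ⟨E, hE, hE'⟩ := exists_addEnergy_image_Icc_pow_le henergy hm
  have hae := ae_eventually_exists_le_norm_sq (P := fun k => Nat.primesLE (k ^ 2))
    (A := fun k => (Icc 1 (k ^ m)).image a)
    (W := fun k => 1 + B / Real.log 2 * (k : ℝ) ^ (1 / 4 : ℝ)) ?_ ?_
    (fun k p hp => Nat.prime_of_mem_primesLE hp) (fun k => by positivity)
    (fun k v hv => (card_filter_dvd_natAbs_sub_le
      (fun p hp => Nat.prime_of_mem_primesLE hp) (hlog k) hv).trans_eq (by rw [mul_div_right_comm]))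
    (summable_addEnergy_image_Icc_pow_div ha (by positivity) hE hE')
  · filter_upwards [hae] with t ht
    filter_upwards [ht] with k ⟨p, hp, hle⟩
    refine ⟨p, Nat.prime_of_mem_primesLE hp, Nat.le_of_mem_primesLE hp, ?_⟩
    rwa [card_image_Icc_one ha, sum_image (ha.mono fun n hn => (mem_Icc.1 hn).1)] at hle
  · filter_upwards [eventually_ge_atTop 1] with k hk
    exact (nonempty_Icc.2 (Nat.one_le_pow m k hk)).image a
  · filter_upwards [eventually_ge_atTop 2] with k hk
    exact ⟨2, Nat.mem_primesLE.2 ⟨hk.trans (Nat.le_self_pow two_ne_zero k), Nat.prime_two⟩⟩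

lemma sqrt_le_mul_starDisc_of_le_norm_sq {N p : ℕ} {y : ℕ → ℝ} (hp : p ≠ 0)
    (h : (N : ℝ) / 2 ≤ ‖∑ n ∈ Icc 1 N, (𝐞 (p * y n) : ℂ)‖ ^ 2) :
    √N ≤ 9 * p * (N * starDisc N fun n => Int.fract (y n)) := by
  have hdisc := norm_sum_fourierChar_le_starDisc N y hp
  set D := N * starDisc N fun n => Int.fract (y n)
  have hD : 0 ≤ p * D := by
    have h0 := (norm_nonneg _).trans hdisc
    rw [mul_assoc] at h0
    exact nonneg_of_mul_nonneg_right h0 Real.two_pi_pos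
  have hπ : 8 * π ^ 2 ≤ 81 := by nlinarith [Real.pi_lt_d2, Real.pi_pos]
  refine Real.sqrt_le_iff.2 ⟨by linarith, ?_⟩
  calc (N : ℝ) ≤ 2 * (2 * π * p * D) ^ 2 := by
        linarith [pow_le_pow_left₀ (norm_nonneg _) hdisc 2]
    _ = 8 * π ^ 2 * (p * D) ^ 2 := by ring
    _ ≤ 81 * (p * D) ^ 2 := by gcongr
    _ = (9 * p * D) ^ 2 := by ring

lemma ae_frequently_rpow_le_natCast_mul_starDisc (ha : Set.InjOn a (Set.Ici 1))
    (hgrowth : ∀ ε > (0 : ℝ), ∃ C : ℝ, ∀ n : ℕ, 1 ≤ n → Real.log |(a n : ℝ)| ≤ C * (n : ℝ) ^ ε)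
    (henergy : ∀ ε > (0 : ℝ), ∃ C : ℝ, ∀ N : ℕ, 1 ≤ N →
      (addEnergy ((Icc 1 N).image a) : ℝ) ≤ C * (N : ℝ) ^ ((2 : ℝ) + ε)) :
    ∀ᵐ t : ℝ, ∀ ε > 0, ∃ᶠ N : ℕ in atTop,
      (N : ℝ) ^ ((1 : ℝ) / 2 - ε) ≤ N * starDisc N fun n => Int.fract (a n * t) := by
  have hae := ae_all_iff.2 fun m : ℕ =>
    ae_eventually_exists_prime_le_norm_sq ha hgrowth henergy m.succ_ne_zero
  filter_upwards [hae] with t ht ε hε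
  obtain ⟨m, hm⟩ := exists_nat_ge (3 / ε)
  have hmε : 3 ≤ (m + 1 : ℕ) * ε := by
    rw [div_le_iff₀ hε] at hm
    push_cast
    linarith
  refine (tendsto_pow_atTop m.succ_ne_zero).frequently (Eventually.frequently ?_)
  filter_upwards [ht m, eventually_ge_atTop 9] with k ⟨p, hp, hpk, hle⟩ hk
  have hsqrt := sqrt_le_mul_starDisc_of_le_norm_sq hp.ne_zero hle
  have hk1 : (1 : ℝ) ≤ k := Nat.one_le_cast.2 (by lia)
  have hNε : (k : ℝ) ^ 3 ≤ ((k ^ (m + 1) : ℕ) : ℝ) ^ ε := by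
    rw [Nat.cast_pow, ← Real.rpow_natCast_mul (by positivity), ← Real.rpow_natCast]
    exact Real.rpow_le_rpow_of_exponent_le hk1 hmε
  set N := k ^ (m + 1)
  have hN : (0 : ℝ) < N := Nat.cast_pos.2 (pow_pos (by lia) _)
  set D := N * starDisc N fun n => Int.fract (a n * t)
  have hD : 0 ≤ D := mul_nonneg hN.le (Real.iSup_nonneg fun _ => abs_nonneg _)
  rw [Real.rpow_sub hN, ← Real.sqrt_eq_rpow, div_le_iff₀ (by positivity)]
  calc √N ≤ 9 * p * D := hsqrt
    _ ≤ k * (k : ℝ) ^ 2 * D := by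
        gcongr
        · exact_mod_cast hk
        · exact_mod_cast hpk
    _ = D * (k : ℝ) ^ 3 := by ring
    _ ≤ D * (N : ℝ) ^ ε := by gcongr

end LowerBound

lemma exists_log_le_of_le_mul_exp {C γ : ℝ} (hC : 0 < C) (hγ : 0 < γ) {a : ℕ → ℕ}
    (hpos : ∀ n : ℕ, 1 ≤ n → 0 < a n)
    (h : ∀ n : ℕ, 1 ≤ n → (a n : ℝ) ≤ C * Real.exp (γ * Real.log n ^ 2)) {ε : ℝ} (hε : 0 < ε) :
    ∃ K : ℝ, ∀ n : ℕ, 1 ≤ n → Real.log (a n) ≤ K * (n : ℝ) ^ ε := by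
  refine ⟨|Real.log C| + γ / (ε / 2) ^ 2, fun n hn => ?_⟩
  have hn1 : (1 : ℝ) ≤ n := Nat.one_le_cast.2 hn
  have hlog_sq : Real.log n ^ 2 ≤ (n : ℝ) ^ ε / (ε / 2) ^ 2 := by
    have hlog := Real.log_natCast_le_rpow_div n (half_pos hε)
    calc Real.log n ^ 2 ≤ ((n : ℝ) ^ (ε / 2) / (ε / 2)) ^ 2 :=
          pow_le_pow_left₀ (Real.log_nonneg hn1) hlog 2
      _ = (n : ℝ) ^ ε / (ε / 2) ^ 2 := by
          rw [div_pow, ← Real.rpow_mul_natCast n.cast_nonneg, Nat.cast_ofNat,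
            div_mul_cancel₀ _ two_ne_zero]
  have hone : 1 ≤ (n : ℝ) ^ ε := Real.one_le_rpow hn1 hε.le
  calc Real.log (a n) ≤ Real.log (C * Real.exp (γ * Real.log n ^ 2)) :=
        Real.log_le_log (Nat.cast_pos.2 (hpos n hn)) (h n hn)
    _ = Real.log C + γ * Real.log n ^ 2 := by
        rw [Real.log_mul hC.ne' (Real.exp_ne_zero _), Real.log_exp]
    _ ≤ |Real.log C| * (n : ℝ) ^ ε + γ * ((n : ℝ) ^ ε / (ε / 2) ^ 2) := by
        gcongr
        exact (le_abs_self _).trans (le_mul_of_one_le_right (abs_nonneg _) hone)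
    _ = (|Real.log C| + γ / (ε / 2) ^ 2) * (n : ℝ) ^ ε := by ring

lemma injOn_Ici_natCast_of_lt_succ {a : ℕ → ℕ} (h : ∀ n : ℕ, 1 ≤ n → a n < a (n + 1)) :
    Set.InjOn (fun n => (a n : ℤ)) (Set.Ici 1) :=
  Nat.cast_injective.comp_injOn
    (strictMonoOn_of_lt_succ Set.ordConnected_Ici fun n _ hn _ => h n hn).injOn

end

theorem stmt1_general (a : ℕ → ℤ) (ha : Set.InjOn a (Set.Ici 1))
    (hgrowth : ∀ ε > (0 : ℝ), ∃ C : ℝ, ∀ n : ℕ, 1 ≤ n → Real.log |(a n : ℝ)| ≤ C * (n : ℝ) ^ ε)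
    (henergy : ∀ ε > 0, ∃ Cε : ℝ, ∀ N : ℕ, 1 ≤ N →
      (addEnergy ((Finset.Icc 1 N).image a) : ℝ) ≤ Cε * (N : ℝ) ^ ((2 : ℝ) + ε)) :
    ∀ᵐ α ∂(volume : Measure ℝ),
      (∀ ε > 0, ∃ C'ε : ℝ, ∀ N : ℕ,
        (N : ℝ) * starDisc N (fun n => Int.fract ((a n : ℝ) * α)) ≤
          C'ε * (N : ℝ) ^ ((1 : ℝ) / 2 + ε)) ∧
      (∀ ε > 0, ∃ᶠ N : ℕ in atTop,
        (N : ℝ) * starDisc N (fun n => Int.fract ((a n : ℝ) * α)) ≥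
          (N : ℝ) ^ ((1 : ℝ) / 2 - ε)) :=
  (ae_natCast_mul_starDisc_le ha).and
    (ae_frequently_rpow_le_natCast_mul_starDisc ha hgrowth henergy)

theorem stmt1 (a : ℕ → ℕ)
    (ha_incr : ∀ n : ℕ, 1 ≤ n → a n < a (n + 1))
    (ha_pos : ∀ n : ℕ, 1 ≤ n → 0 < a n)
    (γ C : ℝ) (hγ : 0 < γ) (hC : 0 < C)
    (hgrowth : ∀ n : ℕ, 1 ≤ n → (a n : ℝ) ≤ C * Real.exp (γ * (Real.log n) ^ 2))
    (henergy : ∀ ε > 0, ∃ Cε : ℝ, ∀ N : ℕ, 1 ≤ N →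
      (addEnergy ((Finset.Icc 1 N).image fun n => (a n : ℤ)) : ℝ) ≤ Cε * (N : ℝ) ^ ((2 : ℝ) + ε)) :
    ∀ᵐ α ∂(volume : Measure ℝ),
      (∀ ε > 0, ∃ C'ε : ℝ, ∀ N : ℕ,
        (N : ℝ) * starDisc N (fun n => Int.fract ((a n : ℝ) * α)) ≤
          C'ε * (N : ℝ) ^ ((1 : ℝ) / 2 + ε)) ∧
      (∀ ε > 0, ∃ᶠ N : ℕ in atTop,
        (N : ℝ) * starDisc N (fun n => Int.fract ((a n : ℝ) * α)) ≥
          (N : ℝ) ^ ((1 : ℝ) / 2 - ε)) := by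
  simpa using stmt1_general (fun n => (a n : ℤ)) (injOn_Ici_natCast_of_lt_succ ha_incr)
    (fun ε hε => by simpa using exists_log_le_of_le_mul_exp hC hγ ha_pos hgrowth hε) henergy
end
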